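/- There is a predicate formula deducible in the calculus MQC but not deducible in the classical predicate calculus CQC; namely the formula Ψ* = (Q → Ψ), where Ψ is ¬∀x(¬Φ(x) ∨ Φ(x)) with Φ(x) the formula ∃y(Z(y) & G(x,x,y)), and Z,E,S,A,M are treated as predicate variables. -/

import Mathlib

namespace Cpc

/-! ### Recursion-theoretic preliminaries -/

/-- Kleene application `{e}(a)`: the unary partial recursive function with Gödel number `e`,
applied to `a`. -/
def K (e a : ℕ) : Part ℕ := Nat.Partrec.Code.eval (Denumerable.ofNat Nat.Partrec.Code e) a

/-- `(e)ᵢ`: the exponent of the `i`-th prime in the prime factorization of `e`. -/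
noncomputable def pexp (i e : ℕ) : ℕ := Nat.factorization e (Nat.nth Nat.Prime i)

/-! ### The Cantor pairing function and the enumeration `g` of finitely supported functions -/

/-- The Cantor pairing `c(x,y) = (x+y)(x+y+1)/2 + x`. -/
def cpair (x y : ℕ) : ℕ := (x + y) * (x + y + 1) / 2 + x

/-- Simultaneous computation of the two inverse projections of the Cantor pairing. -/
def lrAux : ℕ → ℕ × ℕ
  | 0 => (0, 0)
  | n + 1 =>
    let p := lrAux n
    if p.2 = 0 then (0, p.1 + 1) else (p.1 + 1, p.2 - 1)

/-- The first projection `l` of the Cantor pairing. -/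
def cl (n : ℕ) : ℕ := (lrAux n).1

/-- The second projection `r` of the Cantor pairing. -/
def cr (n : ℕ) : ℕ := (lrAux n).2

/-- `l*(x,y)`: `l*(x,0) = x`, `l*(x,y+1) = l(l*(x,y))`. -/
def lstar (x : ℕ) : ℕ → ℕ
  | 0 => x
  | y + 1 => cl (lstar x y)

/-- `g(x,y) = r(l*(x,y))`: the enumeration of all finitely supported functions `ℕ → ℕ`. -/
def g (x y : ℕ) : ℕ := cr (lstar x y)

/-- `h(x,y,0) = c(l(x),y)`, `h(x,y,z+1) = c(h(l(x),y,z), r(x))`. -/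
def h : ℕ → ℕ → ℕ → ℕ
  | x, y, 0 => cpair (cl x) y
  | x, y, z + 1 => cpair (h (cl x) y z) (cr x)


/-! ### The predicate language `L*` -/

/-- Individual terms of the language `L*`: individual variables (named by natural numbers)
and individual constants for all natural numbers. -/
inductive PTerm : Type
  | var (v : ℕ)
  | const (c : ℕ)
  deriving DecidableEq

/-- Evaluation of a term under a valuation of the individual variables. -/
def PTerm.eval (ρ : ℕ → ℕ) : PTerm → ℕ
  | var v => ρ v
  | const c => c

/-- The (free) variables of a term. -/
def PTerm.fv : PTerm → Finset ℕ
  | var v => {v}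
  | const _ => ∅

/-- Formulas of the predicate language `L*`: `⊥`, atomic formulas `Pⁿᵢ(t₁,…,tₙ)`
(where the predicate variable `Pⁿᵢ` is recorded by its index `i`; its arity `n` is the
length of the argument list), and the connectives and quantifiers. -/
inductive PFml : Type
  | bot
  | atom (i : ℕ) (args : List PTerm)
  | and (φ ψ : PFml)
  | or (φ ψ : PFml)
  | imp (φ ψ : PFml)
  | all (x : ℕ) (φ : PFml)
  | ex (x : ℕ) (φ : PFml)

/-- `¬Φ` abbreviates `Φ → ⊥`. -/
def PFml.not (φ : PFml) : PFml := φ.imp .bot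

/-- `Φ ↔ Ψ` abbreviates `(Φ → Ψ) & (Ψ → Φ)`. -/
def PFml.iff (φ ψ : PFml) : PFml := (φ.imp ψ).and (ψ.imp φ)

/-- Conjunction of a list of formulas. -/
def bigAnd (l : List PFml) : PFml := l.foldr PFml.and (PFml.bot.imp PFml.bot)

/-- The free variables of a formula. -/
def PFml.fv : PFml → Finset ℕ
  | bot => ∅
  | atom _ args => args.foldr (fun t s => t.fv ∪ s) ∅
  | and φ ψ => φ.fv ∪ ψ.fv
  | or φ ψ => φ.fv ∪ ψ.fv
  | imp φ ψ => φ.fv ∪ ψ.fv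
  | all x φ => φ.fv.erase x
  | ex x φ => φ.fv.erase x

/-- The bound variables of a formula. -/
def PFml.bv : PFml → Finset ℕ
  | bot => ∅
  | atom _ _ => ∅
  | and φ ψ => φ.bv ∪ ψ.bv
  | or φ ψ => φ.bv ∪ ψ.bv
  | imp φ ψ => φ.bv ∪ ψ.bv
  | all x φ => insert x φ.bv
  | ex x φ => insert x φ.bv

/-- A formula is closed if it has no free variables. -/
def PFml.Closed (φ : PFml) : Prop := φ.fv = ∅

/-- Simultaneous substitution of terms for variables in a term. -/
def PTerm.msub (s : ℕ → PTerm) : PTerm → PTerm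
  | var v => s v
  | const c => const c

/-- Simultaneous (naive, i.e. non-capture-avoiding) substitution of terms for the free
occurrences of variables in a formula. -/
def PFml.msub (s : ℕ → PTerm) : PFml → PFml
  | bot => bot
  | atom i args => atom i (args.map (PTerm.msub s))
  | and φ ψ => (φ.msub s).and (ψ.msub s)
  | or φ ψ => (φ.msub s).or (ψ.msub s)
  | imp φ ψ => (φ.msub s).imp (ψ.msub s)
  | all x φ => all x (φ.msub fun v => if v = x then .var x else s v)
  | ex x φ => ex x (φ.msub fun v => if v = x then .var x else s v)

/-- The substitution replacing the single variable `x` by the term `t`. -/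
def sub1 (x : ℕ) (t : PTerm) : ℕ → PTerm := fun v => if v = x then t else .var v

/-- The simultaneous substitution `s` is free for (admissible in) the formula, i.e. no
variable of a substituted term gets captured by a quantifier. -/
def PFml.FreeForM (s : ℕ → PTerm) : PFml → Prop
  | bot => True
  | atom _ _ => True
  | and φ ψ => φ.FreeForM s ∧ ψ.FreeForM s
  | or φ ψ => φ.FreeForM s ∧ ψ.FreeForM s
  | imp φ ψ => φ.FreeForM s ∧ ψ.FreeForM s
  | all x φ => (∀ v ∈ φ.fv, v ≠ x → x ∉ (s v).fv) ∧
      φ.FreeForM (fun v => if v = x then .var x else s v)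
  | ex x φ => (∀ v ∈ φ.fv, v ≠ x → x ∉ (s v).fv) ∧
      φ.FreeForM (fun v => if v = x then .var x else s v)

/-! ### Interpretations and realizability -/

/-- An `n`-ary generalized predicate. -/
def GenPred (n : ℕ) : Type := (Fin n → ℕ) → Set ℕ

/-- An interpretation assigns to each predicate variable `Pⁿᵢ` an `n`-ary generalized
predicate. -/
def Interp : Type := (n : ℕ) → ℕ → GenPred n

/-- The realizability relation `e rᶠ Φ` (relative to a valuation `ρ` of the individual
variables). -/
def Realizes (f : Interp) : (ℕ → ℕ) → ℕ → PFml → Prop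
  | _, _, .bot => False
  | ρ, e, .atom i args => e ∈ f args.length i (fun j => (args.get j).eval ρ)
  | ρ, e, .and φ ψ => Realizes f ρ (pexp 0 e) φ ∧ Realizes f ρ (pexp 1 e) ψ
  | ρ, e, .or φ ψ => (pexp 0 e = 0 ∧ Realizes f ρ (pexp 1 e) φ) ∨
      (pexp 0 e = 1 ∧ Realizes f ρ (pexp 1 e) ψ)
  | ρ, e, .imp φ ψ => ∀ a, Realizes f ρ a φ → ∃ b ∈ K e a, Realizes f ρ b ψ
  | ρ, e, .all x φ => ∀ a, ∃ b ∈ K e a, Realizes f (Function.update ρ x a) b φ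
  | ρ, e, .ex x φ => Realizes f (Function.update ρ x (pexp 0 e)) (pexp 1 e) φ

/-- The zero valuation, used for closed formulas. -/
def rho0 : ℕ → ℕ := fun _ => 0

/-- The closed formula `Φ` is realizable in the interpretation `f`. -/
def FRealizable (f : Interp) (φ : PFml) : Prop := ∃ e, Realizes f rho0 e φ

/-- The closed predicate formula `Φ` is (uniformly) absolutely realizable. -/
def AbsRealizable (φ : PFml) : Prop := ∃ e, ∀ f : Interp, Realizes f rho0 e φ


/-! ### The arithmetical fragment: `Z,E,S,A,M` are the predicate variables
`P¹₀, P²₀, P²₁, P³₀, P³₁`. -/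

/-- `Z(t)`, i.e. the atomic formula `P¹₀(t)`. -/
def vZ (t : PTerm) : PFml := .atom 0 [t]
/-- `E(t,u)`, i.e. `P²₀(t,u)`. -/
def vE (t u : PTerm) : PFml := .atom 0 [t, u]
/-- `S(t,u)`, i.e. `P²₁(t,u)`. -/
def vS (t u : PTerm) : PFml := .atom 1 [t, u]
/-- `A(t,u,w)`, i.e. `P³₀(t,u,w)`. -/
def vA (t u w : PTerm) : PFml := .atom 0 [t, u, w]
/-- `M(t,u,w)`, i.e. `P³₁(t,u,w)`. -/
def vM (t u w : PTerm) : PFml := .atom 1 [t, u, w]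

/-- The standard reading of the arithmetical predicate symbols. -/
def arithStd : (n : ℕ) → ℕ → (Fin n → ℕ) → Prop
  | 1, 0, v => v 0 = 0
  | 2, 0, v => v 0 = v 1
  | 2, 1, v => v 0 + 1 = v 1
  | 3, 0, v => v 0 + v 1 = v 2
  | 3, 1, v => v 0 * v 1 = v 2
  | _, _, _ => False

/-- The standard interpretation: an atomic arithmetical statement is realized by `e`
iff `e = 0` and the statement is true. -/
def stdInterp : Interp := fun n i v => {e | e = 0 ∧ arithStd n i v}

/-- Classical truth of an arithmetical formula in the standard model (atoms of
non-arithmetical predicate variables are read as false). -/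
def TrueStd : (ℕ → ℕ) → PFml → Prop
  | _, .bot => False
  | ρ, .atom i args => arithStd args.length i (fun j => (args.get j).eval ρ)
  | ρ, .and φ ψ => TrueStd ρ φ ∧ TrueStd ρ ψ
  | ρ, .or φ ψ => TrueStd ρ φ ∨ TrueStd ρ ψ
  | ρ, .imp φ ψ => TrueStd ρ φ → TrueStd ρ ψ
  | ρ, .all x φ => ∀ a, TrueStd (Function.update ρ x a) φ
  | ρ, .ex x φ => ∃ a, TrueStd (Function.update ρ x a) φ

/-- The pairs (arity, index) naming the arithmetical predicate symbols `Z,E,S,A,M`. -/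
def arithSlot (n i : ℕ) : Prop := (n = 1 ∧ i = 0) ∨ (n = 2 ∧ i ≤ 1) ∨ (n = 3 ∧ i ≤ 1)

/-- The `Ar`-formula `x ≤ t`, i.e. `∃z A(z,x,t)`. -/
def leF (z x : ℕ) (t : PTerm) : PFml := .ex z (vA (.var z) (.var x) t)

/-- `Δ₀`-formulas of the language `Ar`. -/
inductive IsDelta0 : PFml → Prop
  | bot : IsDelta0 .bot
  | atom {i : ℕ} {args : List PTerm} : arithSlot args.length i → IsDelta0 (.atom i args)
  | and {φ ψ} : IsDelta0 φ → IsDelta0 ψ → IsDelta0 (φ.and ψ)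
  | or {φ ψ} : IsDelta0 φ → IsDelta0 ψ → IsDelta0 (φ.or ψ)
  | imp {φ ψ} : IsDelta0 φ → IsDelta0 ψ → IsDelta0 (φ.imp ψ)
  | ball {x z : ℕ} {t : PTerm} {φ} : x ∉ t.fv → z ∉ t.fv → z ≠ x → IsDelta0 φ →
      IsDelta0 (.all x ((leF z x t).imp φ))
  | bex {x z : ℕ} {t : PTerm} {φ} : x ∉ t.fv → z ∉ t.fv → z ≠ x → IsDelta0 φ →
      IsDelta0 (.ex x ((leF z x t).and φ))

/-- `Σ`-formulas of the language `Ar`. -/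
inductive IsSigma : PFml → Prop
  | delta0 {φ} : IsDelta0 φ → IsSigma φ
  | and {φ ψ} : IsSigma φ → IsSigma ψ → IsSigma (φ.and ψ)
  | or {φ ψ} : IsSigma φ → IsSigma ψ → IsSigma (φ.or ψ)
  | ball {x z : ℕ} {t : PTerm} {φ} : x ∉ t.fv → z ∉ t.fv → z ≠ x → IsSigma φ →
      IsSigma (.all x ((leF z x t).imp φ))
  | bex {x z : ℕ} {t : PTerm} {φ} : x ∉ t.fv → z ∉ t.fv → z ≠ x → IsSigma φ →
      IsSigma (.ex x ((leF z x t).and φ))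
  | ex {x : ℕ} {φ} : IsSigma φ → IsSigma (.ex x φ)




/-- Iterated universal quantification. -/
def alls (xs : List ℕ) (φ : PFml) : PFml := xs.foldr PFml.all φ

open PTerm (var const) in
/-- The axioms `A₁ – A₂₅` of the predicate version `IRA*` of intuitionistic Robinson
arithmetic. -/
def IRAstarAxioms : List PFml := [
  alls [0,1,2] (((vS (var 0) (var 2)).and (vS (var 1) (var 2))).imp (vE (var 0) (var 1))),
  alls [0,1] ((vS (var 0) (var 1)).imp (vZ (var 1)).not),
  alls [0,1,2] (((vE (var 0) (var 1)).and (vE (var 0) (var 2))).imp (vE (var 1) (var 2))),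
  alls [0,1,2] (((vE (var 0) (var 1)).and (vS (var 0) (var 2))).imp (vS (var 1) (var 2))),
  alls [0,1] ((vZ (var 1)).imp (vA (var 0) (var 1) (var 0))),
  alls [0,1,2,3,4] ((((vS (var 1) (var 2)).and (vA (var 0) (var 1) (var 3))).and
      (vS (var 3) (var 4))).imp (vA (var 0) (var 2) (var 4))),
  alls [0,1] ((vZ (var 1)).imp (vM (var 0) (var 1) (var 1))),
  alls [0,1,2,3,4] ((((vS (var 1) (var 2)).and (vM (var 0) (var 1) (var 3))).and
      (vA (var 3) (var 0) (var 4))).imp (vM (var 0) (var 2) (var 4))),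
  alls [0,1,2,3] (((vE (var 0) (var 1)).and (vA (var 0) (var 2) (var 3))).imp
      (vA (var 1) (var 2) (var 3))),
  alls [0,1,2,3] (((vE (var 1) (var 2)).and (vA (var 0) (var 1) (var 3))).imp
      (vA (var 0) (var 2) (var 3))),
  alls [0,1,2,3] (((vE (var 0) (var 1)).and (vM (var 0) (var 2) (var 3))).imp
      (vM (var 1) (var 2) (var 3))),
  alls [0,1,2,3] (((vE (var 1) (var 2)).and (vM (var 0) (var 1) (var 3))).imp
      (vM (var 0) (var 2) (var 3))),
  PFml.all 0 ((vZ (var 0)).or (.ex 1 (vS (var 1) (var 0)))),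
  PFml.ex 0 (vZ (var 0)),
  alls [0,1] (((vZ (var 0)).and (vZ (var 1))).imp (vE (var 0) (var 1))),
  alls [0,1] (((vE (var 0) (var 1)).and (vZ (var 0))).imp (vZ (var 1))),
  PFml.all 0 (.ex 1 (vS (var 0) (var 1))),
  alls [0,1,2] (((vS (var 0) (var 1)).and (vS (var 0) (var 2))).imp (vE (var 1) (var 2))),
  alls [0,1,2] (((vS (var 0) (var 1)).and (vE (var 1) (var 2))).imp (vS (var 0) (var 2))),
  alls [0,1] (.ex 2 (vA (var 0) (var 1) (var 2))),
  alls [0,1,2,3] (((vA (var 0) (var 1) (var 2)).and (vA (var 0) (var 1) (var 3))).imp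
      (vE (var 2) (var 3))),
  alls [0,1,2,3] (((vA (var 0) (var 1) (var 2)).and (vE (var 2) (var 3))).imp
      (vA (var 0) (var 1) (var 3))),
  alls [0,1] (.ex 2 (vM (var 0) (var 1) (var 2))),
  alls [0,1,2,3] (((vM (var 0) (var 1) (var 2)).and (vM (var 0) (var 1) (var 3))).imp
      (vE (var 2) (var 3))),
  alls [0,1,2,3] (((vM (var 0) (var 1) (var 2)).and (vE (var 2) (var 3))).imp
      (vM (var 0) (var 1) (var 3)))]

/-- `A₂₆`: functionality of the formula `G`:
`∀x,y,z₁,z₂ (G(x,y,z₁) & G(x,y,z₂) → E(z₁,z₂))`. Here `G = G(x,y,z)` has distinguished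
free variables `0,1,2` playing the role of `x,y,z`. -/
def A26 (G : PFml) : PFml :=
  alls [0,1,2,3] ((G.and (G.msub (sub1 2 (.var 3)))).imp (vE (.var 2) (.var 3)))

/-- `H(y,x)`, i.e. `∃w(Z(w) & G(y,x,w))`, expressing `{y}(x) = 0`; here `y,x` are the
variables `1,0` and `w` is the fresh variable `5`. -/
def Hfml (G : PFml) : PFml :=
  .ex 5 ((vZ (.var 5)).and (G.msub fun v =>
    if v = 0 then .var 1 else if v = 1 then .var 0 else if v = 2 then .var 5 else .var v))

/-- `B(v,x)` with `v,x` the variables `4,0`; here `B = B(v,x)` has distinguished free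
variables `0,1` playing the role of `v,x`. -/
def B40 (B : PFml) : PFml :=
  B.msub fun v => if v = 0 then .var 4 else if v = 1 then .var 0 else .var v

/-- `A₂₇`: `∀y,z ¬¬∃v ∀x (x ≤ z → (B(v,x) ↔ H(y,x)))`. -/
def A27 (G B : PFml) : PFml :=
  alls [1,2] (PFml.not (PFml.not (.ex 4 (.all 0
    ((leF 6 0 (.var 2)).imp ((B40 B).iff (Hfml G)))))))

/-- `A₂₈`: `∀x,y (B(x,y) ∨ ¬B(x,y))`. -/
def A28 (B : PFml) : PFml := alls [0,1] (B.or B.not)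

/-- `Q`: the conjunction of the formulas `A₁ – A₂₈`. -/
def Qfml (G B : PFml) : PFml := bigAnd (IRAstarAxioms ++ [A26 G, A27 G B, A28 B])

/-- The formula `[n](t)`: `[0](t) = Z(t)`, `[n+1](t) = ∃xₙ([n](xₙ) & S(xₙ,t))`. -/
def numFt : ℕ → PTerm → PFml
  | 0, t => vZ t
  | n + 1, t => .ex n ((numFt n (.var n)).and (vS (.var n) t))



/-- The axiom of equality for the predicate variable `Pⁿᵢ`:
`∀x⃗ ∀y⃗ (E(x₁,y₁) & … & E(xₙ,yₙ) → (P(x⃗) → P(y⃗)))`. -/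
def eqAx (n i : ℕ) : PFml :=
  alls ((List.range n) ++ (List.range n).map (· + n))
    ((bigAnd ((List.range n).map fun j => vE (.var j) (.var (n + j)))).imp
      ((PFml.atom i ((List.range n).map PTerm.var)).imp
        (PFml.atom i ((List.range n).map fun j => PTerm.var (n + j)))))




/-- Schemes over the arithmetical language: formulas of the language `LS*`, whose
atoms are either arithmetical atoms built from the predicate symbols `Z,E,S,A,M` of
`Ar`, or atoms built from the predicate variables `Pⁿᵢ`. -/
inductive Scheme : Type
  | bot
  | sZ (t : PTerm)
  | sE (t u : PTerm)
  | sS (t u : PTerm)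
  | sA (t u w : PTerm)
  | sM (t u w : PTerm)
  | patom (i : ℕ) (args : List PTerm)
  | and (φ ψ : Scheme)
  | or (φ ψ : Scheme)
  | imp (φ ψ : Scheme)
  | all (x : ℕ) (φ : Scheme)
  | ex (x : ℕ) (φ : Scheme)

def Scheme.not (φ : Scheme) : Scheme := φ.imp .bot
def Scheme.iff (φ ψ : Scheme) : Scheme := (φ.imp ψ).and (ψ.imp φ)

def Scheme.fv : Scheme → Finset ℕ
  | bot => ∅
  | sZ t => t.fv
  | sE t u => t.fv ∪ u.fv
  | sS t u => t.fv ∪ u.fv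
  | sA t u w => t.fv ∪ u.fv ∪ w.fv
  | sM t u w => t.fv ∪ u.fv ∪ w.fv
  | patom _ args => args.foldr (fun t s => t.fv ∪ s) ∅
  | and φ ψ => φ.fv ∪ ψ.fv
  | or φ ψ => φ.fv ∪ ψ.fv
  | imp φ ψ => φ.fv ∪ ψ.fv
  | all x φ => φ.fv.erase x
  | ex x φ => φ.fv.erase x

/-- All individual variables occurring in a scheme (free or bound). -/
def Scheme.vars : Scheme → Finset ℕ
  | bot => ∅
  | sZ t => t.fv
  | sE t u => t.fv ∪ u.fv
  | sS t u => t.fv ∪ u.fv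
  | sA t u w => t.fv ∪ u.fv ∪ w.fv
  | sM t u w => t.fv ∪ u.fv ∪ w.fv
  | patom _ args => args.foldr (fun t s => t.fv ∪ s) ∅
  | and φ ψ => φ.vars ∪ ψ.vars
  | or φ ψ => φ.vars ∪ ψ.vars
  | imp φ ψ => φ.vars ∪ ψ.vars
  | all x φ => insert x φ.vars
  | ex x φ => insert x φ.vars

def Scheme.bv : Scheme → Finset ℕ
  | and φ ψ => φ.bv ∪ ψ.bv
  | or φ ψ => φ.bv ∪ ψ.bv
  | imp φ ψ => φ.bv ∪ ψ.bv
  | all x φ => insert x φ.bv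
  | ex x φ => insert x φ.bv
  | _ => ∅

def Scheme.Closed (φ : Scheme) : Prop := φ.fv = ∅

/-- The predicate variables (arity, index) occurring in a scheme. -/
def Scheme.pvars : Scheme → Finset (ℕ × ℕ)
  | patom i args => {(args.length, i)}
  | and φ ψ => φ.pvars ∪ ψ.pvars
  | or φ ψ => φ.pvars ∪ ψ.pvars
  | imp φ ψ => φ.pvars ∪ ψ.pvars
  | all _ φ => φ.pvars
  | ex _ φ => φ.pvars
  | _ => ∅

def Scheme.msub (s : ℕ → PTerm) : Scheme → Scheme
  | bot => bot
  | sZ t => sZ (t.msub s)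
  | sE t u => sE (t.msub s) (u.msub s)
  | sS t u => sS (t.msub s) (u.msub s)
  | sA t u w => sA (t.msub s) (u.msub s) (w.msub s)
  | sM t u w => sM (t.msub s) (u.msub s) (w.msub s)
  | patom i args => patom i (args.map (PTerm.msub s))
  | and φ ψ => (φ.msub s).and (ψ.msub s)
  | or φ ψ => (φ.msub s).or (ψ.msub s)
  | imp φ ψ => (φ.msub s).imp (ψ.msub s)
  | all x φ => all x (φ.msub fun v => if v = x then .var x else s v)
  | ex x φ => ex x (φ.msub fun v => if v = x then .var x else s v)

def Scheme.FreeForM (s : ℕ → PTerm) : Scheme → Prop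
  | and φ ψ => φ.FreeForM s ∧ ψ.FreeForM s
  | or φ ψ => φ.FreeForM s ∧ ψ.FreeForM s
  | imp φ ψ => φ.FreeForM s ∧ ψ.FreeForM s
  | all x φ => (∀ v ∈ φ.fv, v ≠ x → x ∉ (s v).fv) ∧
      φ.FreeForM (fun v => if v = x then .var x else s v)
  | ex x φ => (∀ v ∈ φ.fv, v ≠ x → x ∉ (s v).fv) ∧
      φ.FreeForM (fun v => if v = x then .var x else s v)
  | _ => True

/-- Realizability of schemes: arithmetical atoms are realized by `e` iff `e = 0` and the
atom is true in the standard model; atoms of predicate variables are interpreted by `f`. -/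
def SReal (f : Interp) : (ℕ → ℕ) → ℕ → Scheme → Prop
  | _, _, .bot => False
  | ρ, e, .sZ t => e = 0 ∧ t.eval ρ = 0
  | ρ, e, .sE t u => e = 0 ∧ t.eval ρ = u.eval ρ
  | ρ, e, .sS t u => e = 0 ∧ t.eval ρ + 1 = u.eval ρ
  | ρ, e, .sA t u w => e = 0 ∧ t.eval ρ + u.eval ρ = w.eval ρ
  | ρ, e, .sM t u w => e = 0 ∧ t.eval ρ * u.eval ρ = w.eval ρ
  | ρ, e, .patom i args => e ∈ f args.length i (fun j => (args.get j).eval ρ)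
  | ρ, e, .and φ ψ => SReal f ρ (pexp 0 e) φ ∧ SReal f ρ (pexp 1 e) ψ
  | ρ, e, .or φ ψ => (pexp 0 e = 0 ∧ SReal f ρ (pexp 1 e) φ) ∨
      (pexp 0 e = 1 ∧ SReal f ρ (pexp 1 e) ψ)
  | ρ, e, .imp φ ψ => ∀ a, SReal f ρ a φ → ∃ b ∈ K e a, SReal f ρ b ψ
  | ρ, e, .all x φ => ∀ a, ∃ b ∈ K e a, SReal f (Function.update ρ x a) b φ
  | ρ, e, .ex x φ => SReal f (Function.update ρ x (pexp 0 e)) (pexp 1 e) φ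

/-- A closed scheme is uniformly absolutely realizable if a single `e` realizes it in
every interpretation. -/
def AbsRealizableS (φ : Scheme) : Prop := ∃ e, ∀ f : Interp, SReal f rho0 e φ

/-- Classical truth of a scheme with no predicate variables (arithmetical formula)
in the standard model. -/
def STrue : (ℕ → ℕ) → Scheme → Prop
  | _, .bot => False
  | ρ, .sZ t => t.eval ρ = 0
  | ρ, .sE t u => t.eval ρ = u.eval ρ
  | ρ, .sS t u => t.eval ρ + 1 = u.eval ρ
  | ρ, .sA t u w => t.eval ρ + u.eval ρ = w.eval ρ
  | ρ, .sM t u w => t.eval ρ * u.eval ρ = w.eval ρ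
  | _, .patom _ _ => False
  | ρ, .and φ ψ => STrue ρ φ ∧ STrue ρ ψ
  | ρ, .or φ ψ => STrue ρ φ ∨ STrue ρ ψ
  | ρ, .imp φ ψ => STrue ρ φ → STrue ρ ψ
  | ρ, .all x φ => ∀ a, STrue (Function.update ρ x a) φ
  | ρ, .ex x φ => ∃ a, STrue (Function.update ρ x a) φ

/-- `x ≤ t` in the scheme language: `∃z A(z,x,t)`. -/
def leS (z x : ℕ) (t : PTerm) : Scheme := .ex z (.sA (.var z) (.var x) t)

/-- `Δ₀`-formulas of `Ar` (as schemes). -/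
inductive IsDelta0S : Scheme → Prop
  | bot : IsDelta0S .bot
  | sZ (t) : IsDelta0S (.sZ t)
  | sE (t u) : IsDelta0S (.sE t u)
  | sS (t u) : IsDelta0S (.sS t u)
  | sA (t u w) : IsDelta0S (.sA t u w)
  | sM (t u w) : IsDelta0S (.sM t u w)
  | and {φ ψ} : IsDelta0S φ → IsDelta0S ψ → IsDelta0S (φ.and ψ)
  | or {φ ψ} : IsDelta0S φ → IsDelta0S ψ → IsDelta0S (φ.or ψ)
  | imp {φ ψ} : IsDelta0S φ → IsDelta0S ψ → IsDelta0S (φ.imp ψ)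
  | ball {x z : ℕ} {t : PTerm} {φ} : x ∉ t.fv → z ∉ t.fv → z ≠ x → IsDelta0S φ →
      IsDelta0S (.all x ((leS z x t).imp φ))
  | bex {x z : ℕ} {t : PTerm} {φ} : x ∉ t.fv → z ∉ t.fv → z ≠ x → IsDelta0S φ →
      IsDelta0S (.ex x ((leS z x t).and φ))

/-- `Σ`-formulas of `Ar` (as schemes). -/
inductive IsSigmaS : Scheme → Prop
  | delta0 {φ} : IsDelta0S φ → IsSigmaS φ
  | and {φ ψ} : IsSigmaS φ → IsSigmaS ψ → IsSigmaS (φ.and ψ)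
  | or {φ ψ} : IsSigmaS φ → IsSigmaS ψ → IsSigmaS (φ.or ψ)
  | ball {x z : ℕ} {t : PTerm} {φ} : x ∉ t.fv → z ∉ t.fv → z ≠ x → IsSigmaS φ →
      IsSigmaS (.all x ((leS z x t).imp φ))
  | bex {x z : ℕ} {t : PTerm} {φ} : x ∉ t.fv → z ∉ t.fv → z ≠ x → IsSigmaS φ →
      IsSigmaS (.ex x ((leS z x t).and φ))
  | ex {x : ℕ} {φ} : IsSigmaS φ → IsSigmaS (.ex x φ)

/-- `Φ[c]`: replace each atom `Pⁿᵢ(t₁,…,tₙ)` of a predicate variable by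
`Pⁿ⁺¹ᵢ(c,t₁,…,tₙ)` (arithmetical atoms are unchanged). -/
def Scheme.bracketC (c : ℕ) : Scheme → Scheme
  | patom i args => patom i (.const c :: args)
  | and φ ψ => (φ.bracketC c).and (ψ.bracketC c)
  | or φ ψ => (φ.bracketC c).or (ψ.bracketC c)
  | imp φ ψ => (φ.bracketC c).imp (ψ.bracketC c)
  | all x φ => all x (φ.bracketC c)
  | ex x φ => ex x (φ.bracketC c)
  | φ => φ

/-- `Φ[z]` for a variable `z`: replace each atom `Pⁿᵢ(t₁,…,tₙ)` of a predicate variable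
by `Pⁿ⁺¹ᵢ(z,t₁,…,tₙ)`. -/
def Scheme.bracketV (z : ℕ) : Scheme → Scheme
  | patom i args => patom i (.var z :: args)
  | and φ ψ => (φ.bracketV z).and (ψ.bracketV z)
  | or φ ψ => (φ.bracketV z).or (ψ.bracketV z)
  | imp φ ψ => (φ.bracketV z).imp (ψ.bracketV z)
  | all x φ => all x (φ.bracketV z)
  | ex x φ => ex x (φ.bracketV z)
  | φ => φ

/-- The interpretation `f_c`: `f_c(Pⁿᵢ)(k₁,…,kₙ) = f(Pⁿ⁺¹ᵢ)(c,k₁,…,kₙ)`. -/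
def interpCons (c : ℕ) (f : Interp) : Interp := fun n i v => f (n + 1) i (Fin.cons c v)

/-- Does the predicate variable `Pⁿᵢ` occur in the scheme? -/
def Scheme.occursP (n i : ℕ) : Scheme → Prop
  | patom j args => j = i ∧ args.length = n
  | and φ ψ => φ.occursP n i ∨ ψ.occursP n i
  | or φ ψ => φ.occursP n i ∨ ψ.occursP n i
  | imp φ ψ => φ.occursP n i ∨ ψ.occursP n i
  | all _ φ => φ.occursP n i
  | ex _ φ => φ.occursP n i
  | _ => False

/-- The substitution of the terms `args` for the distinguished variables `x₁,…,xₙ`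
(named `0,…,n-1`). -/
def argSub (args : List PTerm) : ℕ → PTerm :=
  fun v => if h : v < args.length then args.get ⟨v, h⟩ else .var v

/-- Substitution of schemes for predicate variables: each atom `Pⁿᵢ(t₁,…,tₙ)` is
replaced by the result of simultaneously substituting `t₁,…,tₙ` for the distinguished
variables `0,…,n-1` of the scheme `σ n i`. -/
def Scheme.substP (σ : ℕ → ℕ → Scheme) : Scheme → Scheme
  | patom i args => (σ args.length i).msub (argSub args)
  | and φ ψ => (φ.substP σ).and (ψ.substP σ)
  | or φ ψ => (φ.substP σ).or (ψ.substP σ)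
  | imp φ ψ => (φ.substP σ).imp (ψ.substP σ)
  | all x φ => all x (φ.substP σ)
  | ex x φ => ex x (φ.substP σ)
  | φ => φ

/-- The list of schemes `σ` is acceptable for substitution in the given scheme:
(1) at every atom of a predicate variable the substitution of the argument terms
for the distinguished variables is capture-free, and (2) no atom of a predicate
variable lies in the scope of a quantifier binding a "superfluous" parameter of the
scheme substituted for that variable. -/
def Scheme.Acceptable (σ : ℕ → ℕ → Scheme) : Scheme → Prop
  | patom i args => (σ args.length i).FreeForM (argSub args)
  | and φ ψ => φ.Acceptable σ ∧ ψ.Acceptable σ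
  | or φ ψ => φ.Acceptable σ ∧ ψ.Acceptable σ
  | imp φ ψ => φ.Acceptable σ ∧ ψ.Acceptable σ
  | all x φ => (∀ n i, φ.occursP n i → x ∉ (σ n i).fv \ Finset.range n) ∧ φ.Acceptable σ
  | ex x φ => (∀ n i, φ.occursP n i → x ∉ (σ n i).fv \ Finset.range n) ∧ φ.Acceptable σ
  | _ => True

/-- The universal closure of a scheme. -/
def Scheme.univClosure (φ : Scheme) : Scheme :=
  (φ.fv.sort (· ≤ ·)).foldr Scheme.all φ




/-- Natural deduction for the intuitionistic predicate calculus `IQC` in the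
language `L*`. -/
inductive IQC : List PFml → PFml → Prop
  | hyp {Γ : List PFml} {φ : PFml} : φ ∈ Γ → IQC Γ φ
  | botE {Γ φ} : IQC Γ .bot → IQC Γ φ
  | andI {Γ : List PFml} {φ ψ : PFml} : IQC Γ φ → IQC Γ ψ → IQC Γ (φ.and ψ)
  | andE1 {Γ : List PFml} {φ ψ : PFml} : IQC Γ (φ.and ψ) → IQC Γ φ
  | andE2 {Γ : List PFml} {φ ψ : PFml} : IQC Γ (φ.and ψ) → IQC Γ ψ
  | orI1 {Γ : List PFml} {φ ψ : PFml} : IQC Γ φ → IQC Γ (φ.or ψ)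
  | orI2 {Γ : List PFml} {φ ψ : PFml} : IQC Γ ψ → IQC Γ (φ.or ψ)
  | orE {Γ φ ψ χ} : IQC Γ (φ.or ψ) → IQC (φ :: Γ) χ → IQC (ψ :: Γ) χ → IQC Γ χ
  | impI {Γ : List PFml} {φ ψ : PFml} : IQC (φ :: Γ) ψ → IQC Γ (φ.imp ψ)
  | impE {Γ : List PFml} {φ ψ : PFml} : IQC Γ (φ.imp ψ) → IQC Γ φ → IQC Γ ψ
  | allI {Γ x φ} : IQC Γ φ → (∀ ψ ∈ Γ, x ∉ ψ.fv) → IQC Γ (.all x φ)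
  | allE {Γ x φ} (t : PTerm) : IQC Γ (.all x φ) → φ.FreeForM (sub1 x t) →
      IQC Γ (φ.msub (sub1 x t))
  | exI {Γ x φ} (t : PTerm) : IQC Γ (φ.msub (sub1 x t)) → φ.FreeForM (sub1 x t) →
      IQC Γ (.ex x φ)
  | exE {Γ x φ χ} : IQC Γ (.ex x φ) → IQC (φ :: Γ) χ → x ∉ χ.fv →
      (∀ ψ ∈ Γ, x ∉ ψ.fv) → IQC Γ χ

/-- `Pⁿᵢ` occurs in the formula. -/
def PFml.occursP (n i : ℕ) : PFml → Prop
  | .atom j args => j = i ∧ args.length = n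
  | .and φ ψ => φ.occursP n i ∨ ψ.occursP n i
  | .or φ ψ => φ.occursP n i ∨ ψ.occursP n i
  | .imp φ ψ => φ.occursP n i ∨ ψ.occursP n i
  | .all _ φ => φ.occursP n i
  | .ex _ φ => φ.occursP n i
  | _ => False



/-- Substitution of formulas for predicate variables. -/
def PFml.substP (σ : ℕ → ℕ → PFml) : PFml → PFml
  | .atom i args => (σ args.length i).msub (argSub args)
  | .and φ ψ => (φ.substP σ).and (ψ.substP σ)
  | .or φ ψ => (φ.substP σ).or (ψ.substP σ)
  | .imp φ ψ => (φ.substP σ).imp (ψ.substP σ)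
  | .all x φ => .all x (φ.substP σ)
  | .ex x φ => .ex x (φ.substP σ)
  | .bot => .bot

def PFml.AcceptableP (σ : ℕ → ℕ → PFml) : PFml → Prop
  | .atom i args => (σ args.length i).FreeForM (argSub args)
  | .and φ ψ => φ.AcceptableP σ ∧ ψ.AcceptableP σ
  | .or φ ψ => φ.AcceptableP σ ∧ ψ.AcceptableP σ
  | .imp φ ψ => φ.AcceptableP σ ∧ ψ.AcceptableP σ
  | .all x φ => (∀ n i, φ.occursP n i → x ∉ (σ n i).fv \ Finset.range n) ∧ φ.AcceptableP σ
  | .ex x φ => (∀ n i, φ.occursP n i → x ∉ (σ n i).fv \ Finset.range n) ∧ φ.AcceptableP σ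
  | .bot => True

/-- `φ` is a substitutional instance of the predicate formula `base`. -/
def IsInstance (base φ : PFml) : Prop :=
  ∃ σ : ℕ → ℕ → PFml, base.AcceptableP σ ∧ φ = base.substP σ



inductive LATerm : Type
  | var (v : ℕ)
  | zero
  | succ (t : LATerm)
  | add (t u : LATerm)
  | mul (t u : LATerm)

def LATerm.eval (ρ : ℕ → ℕ) : LATerm → ℕ
  | var v => ρ v
  | zero => 0
  | succ t => t.eval ρ + 1
  | add t u => t.eval ρ + u.eval ρ
  | mul t u => t.eval ρ * u.eval ρ

def LATerm.fv : LATerm → Finset ℕ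
  | var v => {v}
  | zero => ∅
  | succ t => t.fv
  | add t u => t.fv ∪ u.fv
  | mul t u => t.fv ∪ u.fv

def LATerm.msub (s : ℕ → LATerm) : LATerm → LATerm
  | var v => s v
  | zero => zero
  | succ t => succ (t.msub s)
  | add t u => add (t.msub s) (u.msub s)
  | mul t u => mul (t.msub s) (u.msub s)

/-- The numeral for `n`. -/
def numeral : ℕ → LATerm
  | 0 => .zero
  | n + 1 => .succ (numeral n)

inductive LAFml : Type
  | eq (t u : LATerm)
  | and (φ ψ : LAFml)
  | or (φ ψ : LAFml)
  | imp (φ ψ : LAFml)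
  | not (φ : LAFml)
  | all (x : ℕ) (φ : LAFml)
  | ex (x : ℕ) (φ : LAFml)

def LAFml.fv : LAFml → Finset ℕ
  | eq t u => t.fv ∪ u.fv
  | and φ ψ => φ.fv ∪ ψ.fv
  | or φ ψ => φ.fv ∪ ψ.fv
  | imp φ ψ => φ.fv ∪ ψ.fv
  | not φ => φ.fv
  | all x φ => φ.fv.erase x
  | ex x φ => φ.fv.erase x

def LAFml.msub (s : ℕ → LATerm) : LAFml → LAFml
  | eq t u => eq (t.msub s) (u.msub s)
  | and φ ψ => (φ.msub s).and (ψ.msub s)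
  | or φ ψ => (φ.msub s).or (ψ.msub s)
  | imp φ ψ => (φ.msub s).imp (ψ.msub s)
  | not φ => (φ.msub s).not
  | all x φ => all x (φ.msub fun v => if v = x then .var x else s v)
  | ex x φ => ex x (φ.msub fun v => if v = x then .var x else s v)

def sub1LA (x : ℕ) (t : LATerm) : ℕ → LATerm := fun v => if v = x then t else .var v

def LAFml.FreeForM (s : ℕ → LATerm) : LAFml → Prop
  | and φ ψ => φ.FreeForM s ∧ ψ.FreeForM s
  | or φ ψ => φ.FreeForM s ∧ ψ.FreeForM s
  | imp φ ψ => φ.FreeForM s ∧ ψ.FreeForM s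
  | not φ => φ.FreeForM s
  | all x φ => (∀ v ∈ φ.fv, v ≠ x → x ∉ (s v).fv) ∧
      φ.FreeForM (fun v => if v = x then .var x else s v)
  | ex x φ => (∀ v ∈ φ.fv, v ≠ x → x ∉ (s v).fv) ∧
      φ.FreeForM (fun v => if v = x then .var x else s v)
  | _ => True

/-- Classical truth of an `LA`-formula in the standard model. -/
def LATrue : (ℕ → ℕ) → LAFml → Prop
  | ρ, .eq t u => t.eval ρ = u.eval ρ
  | ρ, .and φ ψ => LATrue ρ φ ∧ LATrue ρ ψ
  | ρ, .or φ ψ => LATrue ρ φ ∨ LATrue ρ ψ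
  | ρ, .imp φ ψ => LATrue ρ φ → LATrue ρ ψ
  | ρ, .not φ => ¬ LATrue ρ φ
  | ρ, .all x φ => ∀ a, LATrue (Function.update ρ x a) φ
  | ρ, .ex x φ => ∃ a, LATrue (Function.update ρ x a) φ


/-- Kleene's recursive realizability for `LA`-formulas. -/
def LAReal : (ℕ → ℕ) → ℕ → LAFml → Prop
  | ρ, e, .eq t u => e = 0 ∧ t.eval ρ = u.eval ρ
  | ρ, e, .and φ ψ => LAReal ρ (pexp 0 e) φ ∧ LAReal ρ (pexp 1 e) ψ
  | ρ, e, .or φ ψ => (pexp 0 e = 0 ∧ LAReal ρ (pexp 1 e) φ) ∨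
      (pexp 0 e = 1 ∧ LAReal ρ (pexp 1 e) ψ)
  | ρ, e, .imp φ ψ => ∀ a, LAReal ρ a φ → ∃ b ∈ K e a, LAReal ρ b ψ
  | ρ, _, .not φ => ∀ a, ¬ LAReal ρ a φ
  | ρ, e, .all x φ => ∀ a, ∃ b ∈ K e a, LAReal (Function.update ρ x a) b φ
  | ρ, e, .ex x φ => LAReal (Function.update ρ x (pexp 0 e)) (pexp 1 e) φ

/-- `t₁ ≤ t₂` in `LA`: `∃v (t₁ + v = t₂)`. -/
def leLA (x v : ℕ) (t : LATerm) : LAFml := .ex v (.eq (.add (.var x) (.var v)) t)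

inductive IsDelta0LA : LAFml → Prop
  | eq (t u) : IsDelta0LA (.eq t u)
  | and {φ ψ} : IsDelta0LA φ → IsDelta0LA ψ → IsDelta0LA (φ.and ψ)
  | or {φ ψ} : IsDelta0LA φ → IsDelta0LA ψ → IsDelta0LA (φ.or ψ)
  | imp {φ ψ} : IsDelta0LA φ → IsDelta0LA ψ → IsDelta0LA (φ.imp ψ)
  | not {φ} : IsDelta0LA φ → IsDelta0LA φ.not
  | ball {x v : ℕ} {t : LATerm} {φ} : x ∉ t.fv → v ∉ t.fv → v ≠ x → IsDelta0LA φ →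
      IsDelta0LA (.all x ((leLA x v t).imp φ))
  | bex {x v : ℕ} {t : LATerm} {φ} : x ∉ t.fv → v ∉ t.fv → v ≠ x → IsDelta0LA φ →
      IsDelta0LA (.ex x ((leLA x v t).and φ))

inductive IsSigmaLA : LAFml → Prop
  | delta0 {φ} : IsDelta0LA φ → IsSigmaLA φ
  | and {φ ψ} : IsSigmaLA φ → IsSigmaLA ψ → IsSigmaLA (φ.and ψ)
  | or {φ ψ} : IsSigmaLA φ → IsSigmaLA ψ → IsSigmaLA (φ.or ψ)
  | ball {x v : ℕ} {t : LATerm} {φ} : x ∉ t.fv → v ∉ t.fv → v ≠ x → IsSigmaLA φ →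
      IsSigmaLA (.all x ((leLA x v t).imp φ))
  | bex {x v : ℕ} {t : LATerm} {φ} : x ∉ t.fv → v ∉ t.fv → v ≠ x → IsSigmaLA φ →
      IsSigmaLA (.ex x ((leLA x v t).and φ))
  | ex {x : ℕ} {φ} : IsSigmaLA φ → IsSigmaLA (.ex x φ)

/-- Natural deduction over `LA` from a set `Ax` of non-logical axioms
(intuitionistic logic). -/
inductive LD (Ax : LAFml → Prop) : List LAFml → LAFml → Prop
  | ax {Γ φ} : Ax φ → LD Ax Γ φ
  | hyp {Γ φ} : φ ∈ Γ → LD Ax Γ φ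
  | andI {Γ : List LAFml} {φ ψ : LAFml} : LD Ax Γ φ → LD Ax Γ ψ → LD Ax Γ (φ.and ψ)
  | andE1 {Γ : List LAFml} {φ ψ : LAFml} : LD Ax Γ (φ.and ψ) → LD Ax Γ φ
  | andE2 {Γ : List LAFml} {φ ψ : LAFml} : LD Ax Γ (φ.and ψ) → LD Ax Γ ψ
  | orI1 {Γ : List LAFml} {φ ψ : LAFml} : LD Ax Γ φ → LD Ax Γ (φ.or ψ)
  | orI2 {Γ : List LAFml} {φ ψ : LAFml} : LD Ax Γ ψ → LD Ax Γ (φ.or ψ)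
  | orE {Γ φ ψ χ} : LD Ax Γ (φ.or ψ) → LD Ax (φ :: Γ) χ → LD Ax (ψ :: Γ) χ → LD Ax Γ χ
  | impI {Γ : List LAFml} {φ ψ : LAFml} : LD Ax (φ :: Γ) ψ → LD Ax Γ (φ.imp ψ)
  | impE {Γ : List LAFml} {φ ψ : LAFml} : LD Ax Γ (φ.imp ψ) → LD Ax Γ φ → LD Ax Γ ψ
  | notI {Γ : List LAFml} {φ ψ : LAFml} : LD Ax (φ :: Γ) ψ → LD Ax (φ :: Γ) ψ.not → LD Ax Γ φ.not
  | notE {Γ : List LAFml} {φ ψ : LAFml} : LD Ax Γ φ → LD Ax Γ φ.not → LD Ax Γ ψ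
  | allI {Γ x φ} : LD Ax Γ φ → (∀ ψ ∈ Γ, x ∉ ψ.fv) → LD Ax Γ (.all x φ)
  | allE {Γ x φ} (t : LATerm) : LD Ax Γ (.all x φ) → φ.FreeForM (sub1LA x t) →
      LD Ax Γ (φ.msub (sub1LA x t))
  | exI {Γ x φ} (t : LATerm) : LD Ax Γ (φ.msub (sub1LA x t)) → φ.FreeForM (sub1LA x t) →
      LD Ax Γ (.ex x φ)
  | exE {Γ x φ χ} : LD Ax Γ (.ex x φ) → LD Ax (φ :: Γ) χ → x ∉ χ.fv →
      (∀ ψ ∈ Γ, x ∉ ψ.fv) → LD Ax Γ χ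

open LATerm (var) in
/-- The axioms of equality and the Peano axioms for successor, sum and product
(without induction). -/
def baseAxioms : List LAFml := [
  .all 0 (.eq (var 0) (var 0)),
  .all 0 (.all 1 (.all 2 ((LAFml.eq (var 0) (var 1)).imp
    ((LAFml.eq (var 0) (var 2)).imp (.eq (var 1) (var 2)))))),
  .all 0 (.all 1 ((LAFml.eq (var 0) (var 1)).imp (.eq (.succ (var 0)) (.succ (var 1))))),
  .all 0 (.all 1 ((LAFml.eq (.succ (var 0)) (.succ (var 1))).imp (.eq (var 0) (var 1)))),
  .all 0 (LAFml.not (.eq (.succ (var 0)) .zero)),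
  .all 0 (.all 1 (.all 2 ((LAFml.eq (var 0) (var 1)).imp
    (.eq (.add (var 0) (var 2)) (.add (var 1) (var 2)))))),
  .all 0 (.all 1 (.all 2 ((LAFml.eq (var 0) (var 1)).imp
    (.eq (.add (var 2) (var 0)) (.add (var 2) (var 1)))))),
  .all 0 (.all 1 (.all 2 ((LAFml.eq (var 0) (var 1)).imp
    (.eq (.mul (var 0) (var 2)) (.mul (var 1) (var 2)))))),
  .all 0 (.all 1 (.all 2 ((LAFml.eq (var 0) (var 1)).imp
    (.eq (.mul (var 2) (var 0)) (.mul (var 2) (var 1)))))),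
  .all 0 (.eq (.add (var 0) .zero) (var 0)),
  .all 0 (.all 1 (.eq (.add (var 0) (.succ (var 1))) (.succ (.add (var 0) (var 1))))),
  .all 0 (.eq (.mul (var 0) .zero) .zero),
  .all 0 (.all 1 (.eq (.mul (var 0) (.succ (var 1)))
    (.add (.mul (var 0) (var 1)) (var 0))))]

/-- The axioms of intuitionistic Robinson arithmetic `IRA`: the Peano axioms with the
induction scheme replaced by `∀x (x = 0 ∨ ∃y (x = sy))`. -/
def IRAax (φ : LAFml) : Prop :=
  φ ∈ baseAxioms ∨
    φ = .all 0 ((LAFml.eq (.var 0) .zero).or (.ex 1 (.eq (.var 0) (.succ (.var 1)))))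

/-- An instance of the induction scheme. -/
def indInst (x : ℕ) (φ : LAFml) : LAFml :=
  ((φ.msub (sub1LA x .zero)).and
    (.all x (φ.imp (φ.msub (sub1LA x (.succ (.var x))))))).imp (.all x φ)

/-- The axioms of Heyting arithmetic `HA`. -/
def HAax (ψ : LAFml) : Prop := ψ ∈ baseAxioms ∨ ∃ x φ, ψ = indInst x φ




/-- Translation of schemes into pure predicate formulas: the arithmetical predicate
symbols `Z,E,S,A,M` become the predicate variables `P¹₀,P²₀,P²₁,P³₀,P³₁`, and the other
predicate variables are renamed injectively so as to avoid these five. -/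
def Scheme.toPFml : Scheme → PFml
  | .bot => .bot
  | .sZ t => vZ t
  | .sE t u => vE t u
  | .sS t u => vS t u
  | .sA t u w => vA t u w
  | .sM t u w => vM t u w
  | .patom i args => .atom (i + 2) args
  | .and φ ψ => φ.toPFml.and ψ.toPFml
  | .or φ ψ => φ.toPFml.or ψ.toPFml
  | .imp φ ψ => φ.toPFml.imp ψ.toPFml
  | .all x φ => .all x φ.toPFml
  | .ex x φ => .ex x φ.toPFml

/-- `Eq(E,P₁,…,Pₘ)`: the conjunction of the axioms of equality for the predicate
variables of the scheme `Φ` (as renamed by `Scheme.toPFml`). -/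
noncomputable def EqFor (Φ : Scheme) : PFml :=
  bigAnd (Φ.pvars.toList.map fun p => eqAx p.1 (p.2 + 2))

/-- `Φ*`: the pure predicate formula
`Q(Z,E,S,A,M) & Eq(E,P₁,…,Pₘ) → Φ(Z,E,S,A,M,P₁,…,Pₘ)` associated with a scheme `Φ`. -/
noncomputable def SchemeStar (G B : PFml) (Φ : Scheme) : PFml :=
  ((Qfml G B).and (EqFor Φ)).imp Φ.toPFml

/-- The Markov principle `M` as a pure predicate formula, with `P` the unary
predicate variable `P¹₁`. -/
def Mfml : PFml :=
  ((PFml.all 0 ((PFml.atom 1 [.var 0]).or (PFml.atom 1 [.var 0]).not)).and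
    (PFml.ex 0 (PFml.atom 1 [.var 0])).not.not).imp (PFml.ex 0 (PFml.atom 1 [.var 0]))

/-- `G(z,x,y)` where `z,x,y` are the variables `2,0,1` and the distinguished variables
`0,1,2` of `G` play the role of `x,y,z` in `G(x,y,z)` (expressing `{x}(y)=z`). -/
def Gzxy (G : PFml) : PFml :=
  G.msub fun v => if v = 0 then .var 2 else if v = 1 then .var 0 else
    if v = 2 then .var 1 else .var v

/-- The scheme `nCT` as a pure predicate formula: `P` is the predicate variable `P¹₁`
and `Q'` is `P²₂`. -/
def nCTfml (G : PFml) : PFml :=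
  (PFml.all 0 ((PFml.atom 1 [.var 0]).not.imp
      (PFml.ex 1 (PFml.atom 2 [.var 0, .var 1])))).imp
    (PFml.ex 2 (PFml.all 0 ((PFml.atom 1 [.var 0]).not.imp
      (PFml.ex 1 ((Gzxy G).and (PFml.atom 2 [.var 0, .var 1]))))))

/-- The pure predicate formula `nCT*`, i.e. `Q & Eq(E,P,Q') → nCT`. -/
def nCTstar (G B : PFml) : PFml :=
  ((Qfml G B).and ((eqAx 1 1).and (eqAx 2 2))).imp (nCTfml G)

/-- The calculus `MQC`: intuitionistic predicate calculus together with all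
substitutional instances of the Markov principle `M` and of the formula `nCT*`
as axioms. -/
inductive MQC (G B : PFml) : List PFml → PFml → Prop
  | axM {Γ : List PFml} {φ : PFml} : IsInstance Mfml φ → MQC G B Γ φ
  | axCT {Γ : List PFml} {φ : PFml} : IsInstance (nCTstar G B) φ → MQC G B Γ φ
  | hyp {Γ : List PFml} {φ : PFml} : φ ∈ Γ → MQC G B Γ φ
  | botE {Γ φ} : MQC G B Γ .bot → MQC G B Γ φ
  | andI {Γ : List PFml} {φ ψ : PFml} : MQC G B Γ φ → MQC G B Γ ψ → MQC G B Γ (φ.and ψ)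
  | andE1 {Γ : List PFml} {φ ψ : PFml} : MQC G B Γ (φ.and ψ) → MQC G B Γ φ
  | andE2 {Γ : List PFml} {φ ψ : PFml} : MQC G B Γ (φ.and ψ) → MQC G B Γ ψ
  | orI1 {Γ : List PFml} {φ ψ : PFml} : MQC G B Γ φ → MQC G B Γ (φ.or ψ)
  | orI2 {Γ : List PFml} {φ ψ : PFml} : MQC G B Γ ψ → MQC G B Γ (φ.or ψ)
  | orE {Γ : List PFml} {φ ψ χ : PFml} : MQC G B Γ (φ.or ψ) → MQC G B (φ :: Γ) χ →
      MQC G B (ψ :: Γ) χ → MQC G B Γ χ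
  | impI {Γ : List PFml} {φ ψ : PFml} : MQC G B (φ :: Γ) ψ → MQC G B Γ (φ.imp ψ)
  | impE {Γ : List PFml} {φ ψ : PFml} : MQC G B Γ (φ.imp ψ) → MQC G B Γ φ → MQC G B Γ ψ
  | allI {Γ x φ} : MQC G B Γ φ → (∀ ψ ∈ Γ, x ∉ ψ.fv) → MQC G B Γ (.all x φ)
  | allE {Γ x φ} (t : PTerm) : MQC G B Γ (.all x φ) → φ.FreeForM (sub1 x t) →
      MQC G B Γ (φ.msub (sub1 x t))
  | exI {Γ x φ} (t : PTerm) : MQC G B Γ (φ.msub (sub1 x t)) → φ.FreeForM (sub1 x t) →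
      MQC G B Γ (.ex x φ)
  | exE {Γ x φ χ} : MQC G B Γ (.ex x φ) → MQC G B (φ :: Γ) χ → x ∉ χ.fv →
      (∀ ψ ∈ Γ, x ∉ ψ.fv) → MQC G B Γ χ

/-- The classical predicate calculus `CQC`: intuitionistic predicate calculus together
with the law of the excluded middle. -/
inductive CQC : List PFml → PFml → Prop
  | em {Γ : List PFml} (φ : PFml) : CQC Γ (φ.or φ.not)
  | hyp {Γ : List PFml} {φ : PFml} : φ ∈ Γ → CQC Γ φ
  | botE {Γ φ} : CQC Γ .bot → CQC Γ φ
  | andI {Γ : List PFml} {φ ψ : PFml} : CQC Γ φ → CQC Γ ψ → CQC Γ (φ.and ψ)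
  | andE1 {Γ : List PFml} {φ ψ : PFml} : CQC Γ (φ.and ψ) → CQC Γ φ
  | andE2 {Γ : List PFml} {φ ψ : PFml} : CQC Γ (φ.and ψ) → CQC Γ ψ
  | orI1 {Γ : List PFml} {φ ψ : PFml} : CQC Γ φ → CQC Γ (φ.or ψ)
  | orI2 {Γ : List PFml} {φ ψ : PFml} : CQC Γ ψ → CQC Γ (φ.or ψ)
  | orE {Γ : List PFml} {φ ψ χ : PFml} : CQC Γ (φ.or ψ) → CQC (φ :: Γ) χ →
      CQC (ψ :: Γ) χ → CQC Γ χ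
  | impI {Γ : List PFml} {φ ψ : PFml} : CQC (φ :: Γ) ψ → CQC Γ (φ.imp ψ)
  | impE {Γ : List PFml} {φ ψ : PFml} : CQC Γ (φ.imp ψ) → CQC Γ φ → CQC Γ ψ
  | allI {Γ x φ} : CQC Γ φ → (∀ ψ ∈ Γ, x ∉ ψ.fv) → CQC Γ (.all x φ)
  | allE {Γ x φ} (t : PTerm) : CQC Γ (.all x φ) → φ.FreeForM (sub1 x t) →
      CQC Γ (φ.msub (sub1 x t))
  | exI {Γ x φ} (t : PTerm) : CQC Γ (φ.msub (sub1 x t)) → φ.FreeForM (sub1 x t) →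
      CQC Γ (.ex x φ)
  | exE {Γ x φ χ} : CQC Γ (.ex x φ) → CQC (φ :: Γ) χ → x ∉ χ.fv →
      (∀ ψ ∈ Γ, x ∉ ψ.fv) → CQC Γ χ

/-- Auxiliary translation for the predicate form: the formula expressing that the
`LA`-term `t` has value `v`; `k` is a supply of fresh variables, and the next unused
fresh variable is returned. -/
def LATerm.pf : LATerm → ℕ → ℕ → PFml × ℕ
  | .var u, v, k => (vE (.var u) (.var v), k)
  | .zero, v, k => (vZ (.var v), k)
  | .succ t, v, k =>
      let r := t.pf k (k + 1)
      (.ex k (r.1.and (vS (.var k) (.var v))), r.2)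
  | .add t u, v, k =>
      let r1 := t.pf k (k + 2)
      let r2 := u.pf (k + 1) r1.2
      (.ex k (.ex (k + 1) (r1.1.and (r2.1.and (vA (.var k) (.var (k + 1)) (.var v))))), r2.2)
  | .mul t u, v, k =>
      let r1 := t.pf k (k + 2)
      let r2 := u.pf (k + 1) r1.2
      (.ex k (.ex (k + 1) (r1.1.and (r2.1.and (vM (.var k) (.var (k + 1)) (.var v))))), r2.2)

/-- Auxiliary translation for the predicate form of an `LA`-formula;
`k` is a supply of fresh variables. -/
def LAFml.pf : LAFml → ℕ → PFml
  | .eq t u, k =>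
      let r1 := t.pf k (k + 2)
      let r2 := u.pf (k + 1) r1.2
      .ex k (.ex (k + 1) (r1.1.and (r2.1.and (vE (.var k) (.var (k + 1))))))
  | .and φ ψ, k => (φ.pf k).and (ψ.pf k)
  | .or φ ψ, k => (φ.pf k).or (ψ.pf k)
  | .imp φ ψ, k => (φ.pf k).imp (ψ.pf k)
  | .not φ, k => (φ.pf k).not
  | .all x φ, k => .all x (φ.pf k)
  | .ex x φ, k => .ex x (φ.pf k)

def LATerm.vmax : LATerm → ℕ
  | .var v => v + 1
  | .zero => 0
  | .succ t => t.vmax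
  | .add t u => max t.vmax u.vmax
  | .mul t u => max t.vmax u.vmax

def LAFml.vmax : LAFml → ℕ
  | .eq t u => max t.vmax u.vmax
  | .and φ ψ => max φ.vmax ψ.vmax
  | .or φ ψ => max φ.vmax ψ.vmax
  | .imp φ ψ => max φ.vmax ψ.vmax
  | .not φ => φ.vmax
  | .all x φ => max (x + 1) φ.vmax
  | .ex x φ => max (x + 1) φ.vmax

/-- The predicate form of an `LA`-formula: the result of eliminating the function
symbols `0, s, +, ·` and replacing `=` by the predicate symbol `E`. -/
def predForm (φ : LAFml) : PFml := φ.pf φ.vmax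

/-- Translation of `L*`-terms into `LA`-terms (constants become numerals). -/
def PTerm.toLA : PTerm → LATerm
  | .var v => .var v
  | .const c => numeral c

/-- Substitution of arithmetical formulas for the predicate variables of a predicate
formula: the atom `Pⁿᵢ(t₁,…,tₙ)` is replaced by the result of substituting `t₁,…,tₙ`
for the distinguished variables `0,…,n-1` of the `LA`-formula `σ n i`. -/
def PFml.toLA (σ : ℕ → ℕ → LAFml) : PFml → LAFml
  | .bot => .eq .zero (.succ .zero)
  | .atom i args => (σ args.length i).msub
      (fun v => if h : v < args.length then (args.get ⟨v, h⟩).toLA else .var v)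
  | .and φ ψ => (φ.toLA σ).and (ψ.toLA σ)
  | .or φ ψ => (φ.toLA σ).or (ψ.toLA σ)
  | .imp φ ψ => (φ.toLA σ).imp (ψ.toLA σ)
  | .all x φ => .all x (φ.toLA σ)
  | .ex x φ => .ex x (φ.toLA σ)

/-- Acceptability of the arithmetical substitution `σ` for a predicate formula. -/
def PFml.AcceptLA (σ : ℕ → ℕ → LAFml) : PFml → Prop
  | .atom i args => (σ args.length i).FreeForM
      (fun v => if h : v < args.length then (args.get ⟨v, h⟩).toLA else .var v)
  | .and φ ψ => φ.AcceptLA σ ∧ ψ.AcceptLA σ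
  | .or φ ψ => φ.AcceptLA σ ∧ ψ.AcceptLA σ
  | .imp φ ψ => φ.AcceptLA σ ∧ ψ.AcceptLA σ
  | .all x φ => (∀ n i, φ.occursP n i → x ∉ (σ n i).fv \ Finset.range n) ∧ φ.AcceptLA σ
  | .ex x φ => (∀ n i, φ.occursP n i → x ∉ (σ n i).fv \ Finset.range n) ∧ φ.AcceptLA σ
  | .bot => True

/-- The standard arithmetical reading of the predicate symbols `Z,E,S,A,M`. -/
def arithSig : ℕ → ℕ → LAFml
  | 1, 0 => .eq (.var 0) .zero
  | 2, 0 => .eq (.var 0) (.var 1)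
  | 2, 1 => .eq (.succ (.var 0)) (.var 1)
  | 3, 0 => .eq (.add (.var 0) (.var 1)) (.var 2)
  | 3, 1 => .eq (.mul (.var 0) (.var 1)) (.var 2)
  | _, _ => .eq .zero (.succ .zero)

/-- An instance of the Markov scheme `M` in the language `LA`. -/
def MinstLA (x : ℕ) (φ : LAFml) : LAFml :=
  ((LAFml.all x (φ.or φ.not)).and (LAFml.ex x φ).not.not).imp (.ex x φ)

/-- An instance of the scheme `nCT` in the language `LA` (with `x,y,e` the variables
`0,1,2`): `∀x(¬Ψ(x) → ∃y Φ(x,y)) → ∃e ∀x(¬Ψ(x) → ∃y(G(e,x,y) & Φ(x,y)))`. -/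
def nCTinstLA (GLA Ψ Φ : LAFml) : LAFml :=
  (LAFml.all 0 (Ψ.not.imp (.ex 1 Φ))).imp
    (.ex 2 (.all 0 (Ψ.not.imp (.ex 1 ((GLA.msub fun v =>
      if v = 0 then .var 2 else if v = 1 then .var 0 else
        if v = 2 then .var 1 else .var v).and Φ)))))

/-- The axioms of Markov arithmetic `MA = HA + M + nCT`. -/
def MAax (GLA : LAFml) (ψ : LAFml) : Prop :=
  HAax ψ ∨ (∃ x φ, ψ = MinstLA x φ) ∨
    (∃ Ψ Φ : LAFml, 1 ∉ Ψ.fv ∧ 2 ∉ Ψ.fv ∧ 2 ∉ Φ.fv ∧ ψ = nCTinstLA GLA Ψ Φ)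

/-- The axioms of the theory `CA`: the Peano axioms (those of `HA`) together with all
arithmetical substitutional instances of the predicate formulas `M` and `nCT*`. -/
def CAax (G B : PFml) (ψ : LAFml) : Prop :=
  HAax ψ ∨ (∃ σ, Mfml.AcceptLA σ ∧ ψ = Mfml.toLA σ) ∨
    (∃ σ, (nCTstar G B).AcceptLA σ ∧ ψ = (nCTstar G B).toLA σ)


/-- The interpretation `f` is a model of the closed formula `Φ` if `Φ` is
`f`-realizable. -/
def IsModel (f : Interp) (φ : PFml) : Prop := ∃ e, Realizes f rho0 e φ

/-- A natural number `a` is `f`-standard if the formula `[n](a)` is `f`-realizable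
for some `n`. -/
def fStandard (f : Interp) (a : ℕ) : Prop :=
  ∃ n e, Realizes f rho0 e (numFt n (.const a))

/-- The scheme `nCT` (with `P` the unary predicate variable `P¹₀` and `Q'` the binary
predicate variable `P²₀`, and `x,y,z` the variables `0,1,2`):
`∀x(¬P(x) → ∃y Q'(x,y)) → ∃z ∀x (¬P(x) → ∃y (G(z,x,y) & Q'(x,y)))`. -/
def nCTscheme (GS : Scheme) : Scheme :=
  (Scheme.all 0 ((Scheme.patom 0 [.var 0]).not.imp
      (.ex 1 (.patom 0 [.var 0, .var 1])))).imp
    (.ex 2 (.all 0 ((Scheme.patom 0 [.var 0]).not.imp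
      (.ex 1 ((GS.msub fun v => if v = 0 then .var 2 else if v = 1 then .var 0 else
          if v = 2 then .var 1 else .var v).and (.patom 0 [.var 0, .var 1]))))))

/-- The arithmetical formula `Φ(x) = ∃y (Z(y) & G(x,x,y))` (with `x,y` the
variables `0,1`), expressing `{x}(x) = 0`. -/
def PhiX (G : PFml) : PFml :=
  .ex 1 ((vZ (.var 1)).and (G.msub fun v =>
    if v = 0 then .var 0 else if v = 1 then .var 0 else
      if v = 2 then .var 1 else .var v))

/-- The predicate formula `Ψ* = (Q → Ψ)` where `Ψ = ¬∀x(¬Φ(x) ∨ Φ(x))` and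
`Φ(x) = ∃y(Z(y) & G(x,x,y))`. -/
def PsiStar (G B : PFml) : PFml :=
  (Qfml G B).imp (PFml.not (.all 0 (((PhiX G).not).or (PhiX G))))

end Cpc

/-!
In the standard model every conjunct of `Q` is true, and so is `∀x(¬Φ(x) ∨ Φ(x))`, classically.
Hence `Ψ*` is false there, and by soundness `CQC` does not prove it.

In `MQC`, assume `Q` and `∀x(¬Φ(x) ∨ Φ(x))`, and use the instance of `nCT*` in which `P` is `⊥` and
`Q'(x,y)` is `Z(y) ↔ ¬Φ(x)`. For every `x` a `y` with `Q'(x,y)` exists: take zero if `¬Φ(x)`, and a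
successor if `Φ(x)`. Church's thesis then gives an index `e` with `∀x ∃y (G(e,x,y) & Q'(x,y))`. At
`x = e` it yields `{e}(e) = y` with `y = 0 ↔ ¬Φ(e)`; but `Φ(e)` says that `{e}(e) = 0`, a
contradiction. The predicate variables `Z`, `E`, `S`, `A`, `M` survive the substitution, but the
equality axiom for the new `Q'` has to be derived from `Q`, which makes `E` a congruence for every
formula built from them.
-/

namespace Cpc

/-! ### Substitution -/

namespace PTerm

variable {s s' : ℕ → PTerm} {ρ ρ' : ℕ → ℕ}

theorem msub_congr {t : PTerm} (h : ∀ v ∈ t.fv, s v = s' v) : t.msub s = t.msub s' := by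
  cases t with
  | var v => exact h v (Finset.mem_singleton_self v)
  | const c => rfl

theorem msub_var (t : PTerm) : t.msub .var = t := by cases t <;> rfl

theorem msub_msub (t : PTerm) : (t.msub s).msub s' = t.msub fun v => (s v).msub s' := by
  cases t <;> rfl

theorem mem_fv_msub {t : PTerm} {v : ℕ} (h : v ∈ (t.msub s).fv) : ∃ w ∈ t.fv, v ∈ (s w).fv := by
  cases t with
  | var w => exact ⟨w, Finset.mem_singleton_self w, h⟩
  | const c => cases h

theorem eval_congr {t : PTerm} (h : ∀ v ∈ t.fv, ρ v = ρ' v) : t.eval ρ = t.eval ρ' := by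
  cases t with
  | var v => exact h v (Finset.mem_singleton_self v)
  | const c => rfl

theorem eval_msub (t : PTerm) : (t.msub s).eval ρ = t.eval fun v => (s v).eval ρ := by
  cases t <;> rfl

end PTerm

namespace PFml

variable {s s' : ℕ → PTerm}

theorem mem_fv_atom {i v : ℕ} {args : List PTerm} :
    v ∈ (PFml.atom i args).fv ↔ ∃ t ∈ args, v ∈ t.fv := by
  simp only [fv]
  induction args <;> simp_all

theorem msub_congr {φ : PFml} (h : ∀ v ∈ φ.fv, s v = s' v) : φ.msub s = φ.msub s' := by
  induction φ generalizing s s' with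
  | bot => rfl
  | atom i args =>
    exact congrArg (PFml.atom i) (List.map_congr_left fun t ht =>
      PTerm.msub_congr fun v hv => h v (mem_fv_atom.2 ⟨t, ht, hv⟩))
  | and φ ψ ihφ ihψ | or φ ψ ihφ ihψ | imp φ ψ ihφ ihψ =>
    simp only [fv, Finset.mem_union] at h
    simp only [msub, ihφ fun v hv => h v (.inl hv), ihψ fun v hv => h v (.inr hv)]
  | all x φ ih | ex x φ ih =>
    simp only [msub]
    congr 1
    refine ih fun v hv => ?_
    split_ifs with hvx
    · rfl
    · exact h v (Finset.mem_erase.2 ⟨hvx, hv⟩)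

theorem msub_var (φ : PFml) : φ.msub .var = φ := by
  have update_var (x : ℕ) : (fun v => if v = x then PTerm.var x else .var v) = .var :=
    funext fun v => by split_ifs with h <;> simp [h]
  induction φ with
  | bot => rfl
  | atom i args =>
    exact congrArg (PFml.atom i)
      ((List.map_congr_left fun t _ => t.msub_var).trans args.map_id)
  | _ => simp_all [msub]

theorem msub_eq_self {φ : PFml} (h : ∀ v ∈ φ.fv, s v = .var v) : φ.msub s = φ :=
  (msub_congr h).trans φ.msub_var

theorem bv_msub (φ : PFml) : (φ.msub s).bv = φ.bv := by
  induction φ generalizing s <;> simp_all [msub, bv]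

theorem mem_fv_msub {φ : PFml} {v : ℕ} (h : v ∈ (φ.msub s).fv) :
    ∃ w ∈ φ.fv, v ∈ (s w).fv := by
  induction φ generalizing s with
  | bot => simp [msub, fv] at h
  | atom i args =>
    obtain ⟨_, ht, hv⟩ := mem_fv_atom.1 h
    obtain ⟨t, htargs, rfl⟩ := List.mem_map.1 ht
    obtain ⟨w, hw, hvw⟩ := PTerm.mem_fv_msub hv
    exact ⟨w, mem_fv_atom.2 ⟨t, htargs, hw⟩, hvw⟩
  | and φ ψ ihφ ihψ | or φ ψ ihφ ihψ | imp φ ψ ihφ ihψ =>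
    simp only [msub, fv, Finset.mem_union] at h ⊢
    rcases h with h | h
    · exact (ihφ h).imp fun _ hw => ⟨.inl hw.1, hw.2⟩
    · exact (ihψ h).imp fun _ hw => ⟨.inr hw.1, hw.2⟩
  | all x φ ih | ex x φ ih =>
    obtain ⟨hvx, hv⟩ := Finset.mem_erase.1 h
    obtain ⟨w, hw, hvw⟩ := ih hv
    split_ifs at hvw with hwx
    · exact absurd (Finset.mem_singleton.1 hvw) hvx
    · exact ⟨w, Finset.mem_erase.2 ⟨hwx, hw⟩, hvw⟩

theorem msub_msub {φ : PFml} (h : φ.FreeForM s) :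
    (φ.msub s).msub s' = φ.msub fun v => (s v).msub s' := by
  induction φ generalizing s s' with
  | bot => rfl
  | atom i args => simp [msub, PTerm.msub_msub]
  | and φ ψ ihφ ihψ | or φ ψ ihφ ihψ | imp φ ψ ihφ ihψ => simp only [msub, ihφ h.1, ihψ h.2]
  | all x φ ih | ex x φ ih =>
    simp only [msub, ih h.2]
    congr 1
    refine msub_congr fun v hv => ?_
    split_ifs with hvx
    · simp [PTerm.msub]
    · refine PTerm.msub_congr fun w hw => if_neg ?_
      rintro rfl
      exact h.1 v hv hvx hw

theorem freeForM_of_disjoint_bv {φ : PFml}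
    (h : ∀ v ∈ φ.fv, s v = .var v ∨ ∀ w ∈ (s v).fv, w ∉ φ.bv) : φ.FreeForM s := by
  induction φ generalizing s with
  | bot | atom => trivial
  | and φ ψ ihφ ihψ | or φ ψ ihφ ihψ | imp φ ψ ihφ ihψ =>
    simp only [fv, bv, Finset.mem_union, not_or] at h
    exact ⟨ihφ fun v hv => (h v (.inl hv)).imp_right fun hs w hw => (hs w hw).1,
      ihψ fun v hv => (h v (.inr hv)).imp_right fun hs w hw => (hs w hw).2⟩
  | all x φ ih | ex x φ ih =>
    simp only [fv, bv, Finset.mem_erase, Finset.mem_insert, not_or] at h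
    refine ⟨fun v hv hvx hx => ?_, ih fun v hv => ?_⟩
    · rcases h v ⟨hvx, hv⟩ with hs | hs
      · rw [hs] at hx
        exact hvx (Finset.mem_singleton.1 hx).symm
      · exact (hs x hx).1 rfl
    · split_ifs with hvx
      · exact .inl (hvx ▸ rfl)
      · exact (h v ⟨hvx, hv⟩).imp_right fun hs w hw => (hs w hw).2

theorem freeForM_sub1 {φ : PFml} {x : ℕ} {t : PTerm} (h : ∀ v ∈ t.fv, v ∉ φ.bv) :
    φ.FreeForM (sub1 x t) := by
  refine freeForM_of_disjoint_bv fun v _ => ?_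
  unfold sub1
  split_ifs
  exacts [.inr h, .inl rfl]

theorem msub_sub1_self (φ : PFml) (x : ℕ) : φ.msub (sub1 x (.var x)) = φ :=
  msub_eq_self fun v _ => by unfold sub1; split_ifs with h <;> simp [h]

theorem freeForM_sub1_self (φ : PFml) (x : ℕ) : φ.FreeForM (sub1 x (.var x)) :=
  freeForM_of_disjoint_bv fun v _ => .inl <| by unfold sub1; split_ifs with h <;> simp [h]

end PFml

/-! ### Truth in the standard model -/

theorem arithStd_congr {m n i : ℕ} {v : Fin m → ℕ} {w : Fin n → ℕ} (hmn : m = n)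
    (hvw : ∀ j, v j = w (Fin.cast hmn j)) : arithStd m i v ↔ arithStd n i w := by
  subst hmn
  rw [funext hvw]
  rfl

section Truth

variable {ρ ρ' : ℕ → ℕ} {φ : PFml}

theorem trueStd_atom {i : ℕ} {args : List PTerm} :
    TrueStd ρ (.atom i args) ↔
      arithStd (args.map (PTerm.eval ρ)).length i (args.map (PTerm.eval ρ)).get :=
  arithStd_congr (List.length_map _).symm fun j => by simp

theorem trueStd_congr (h : ∀ v ∈ φ.fv, ρ v = ρ' v) : TrueStd ρ φ ↔ TrueStd ρ' φ := by
  induction φ generalizing ρ ρ' with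
  | bot => rfl
  | atom i args =>
    have hargs : args.map (PTerm.eval ρ) = args.map (PTerm.eval ρ') :=
      List.map_congr_left fun t ht =>
        PTerm.eval_congr fun v hv => h v (PFml.mem_fv_atom.2 ⟨t, ht, hv⟩)
    rw [trueStd_atom, trueStd_atom, hargs]
  | and φ ψ ihφ ihψ | or φ ψ ihφ ihψ | imp φ ψ ihφ ihψ =>
    simp only [PFml.fv, Finset.mem_union] at h
    simp only [TrueStd, ihφ fun v hv => h v (.inl hv), ihψ fun v hv => h v (.inr hv)]
  | all x φ ih | ex x φ ih =>
    have hupdate (a : ℕ) :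
        TrueStd (Function.update ρ x a) φ ↔ TrueStd (Function.update ρ' x a) φ :=
      ih fun v hv => by
        by_cases hvx : v = x
        · simp [hvx]
        · simpa [hvx] using h v (Finset.mem_erase.2 ⟨hvx, hv⟩)
    simp only [TrueStd, hupdate]

theorem trueStd_update_of_notMem {x a : ℕ} (hx : x ∉ φ.fv) :
    TrueStd (Function.update ρ x a) φ ↔ TrueStd ρ φ :=
  trueStd_congr fun _ hv => Function.update_of_ne (ne_of_mem_of_not_mem hv hx) _ _

theorem trueStd_msub {s : ℕ → PTerm} (hs : φ.FreeForM s) :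
    TrueStd ρ (φ.msub s) ↔ TrueStd (fun v => (s v).eval ρ) φ := by
  induction φ generalizing ρ s with
  | bot => rfl
  | atom i args =>
    have hargs : (args.map (PTerm.msub s)).map (PTerm.eval ρ) =
        args.map (PTerm.eval fun v => (s v).eval ρ) := by simp [PTerm.eval_msub]
    rw [PFml.msub, trueStd_atom, trueStd_atom, hargs]
  | and φ ψ ihφ ihψ | or φ ψ ihφ ihψ | imp φ ψ ihφ ihψ =>
    simp only [PFml.msub, TrueStd, ihφ hs.1, ihψ hs.2]
  | all x φ ih | ex x φ ih =>
    have hupdate (a : ℕ) :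
        TrueStd (Function.update ρ x a) (φ.msub fun v => if v = x then .var x else s v) ↔
          TrueStd (Function.update (fun v => (s v).eval ρ) x a) φ :=
      (ih hs.2).trans <| trueStd_congr fun v hv => by
        by_cases hvx : v = x
        · simp [hvx, PTerm.eval]
        · simpa [hvx] using PTerm.eval_congr fun w hw =>
            Function.update_of_ne (ne_of_mem_of_not_mem hw (hs.1 v hv hvx)) a ρ
    simp only [PFml.msub, TrueStd, hupdate]

theorem trueStd_msub_sub1 {x : ℕ} {t : PTerm} (ht : φ.FreeForM (sub1 x t)) :
    TrueStd ρ (φ.msub (sub1 x t)) ↔ TrueStd (Function.update ρ x (t.eval ρ)) φ := by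
  rw [trueStd_msub ht]
  refine trueStd_congr fun v _ => ?_
  by_cases hvx : v = x <;> simp [sub1, hvx, PTerm.eval]

theorem trueStd_not : TrueStd ρ φ.not ↔ ¬ TrueStd ρ φ := Iff.rfl

theorem trueStd_iff {ψ : PFml} : TrueStd ρ (φ.iff ψ) ↔ (TrueStd ρ φ ↔ TrueStd ρ ψ) :=
  iff_iff_implies_and_implies.symm

theorem trueStd_bigAnd {l : List PFml} : TrueStd ρ (bigAnd l) ↔ ∀ φ ∈ l, TrueStd ρ φ := by
  induction l with
  | nil => simp [bigAnd, TrueStd]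
  | cons φ l ih => rw [List.forall_mem_cons, ← ih]; rfl

end Truth

theorem CQC.sound {Γ : List PFml} {φ : PFml} (h : CQC Γ φ) {ρ : ℕ → ℕ}
    (hΓ : ∀ ψ ∈ Γ, TrueStd ρ ψ) : TrueStd ρ φ := by
  have update_context {Γ : List PFml} {ρ : ℕ → ℕ} {x : ℕ} (a : ℕ) (hΓ : ∀ ψ ∈ Γ, TrueStd ρ ψ)
      (hx : ∀ ψ ∈ Γ, x ∉ ψ.fv) : ∀ ψ ∈ Γ, TrueStd (Function.update ρ x a) ψ :=
    fun ψ hψ => (trueStd_update_of_notMem (hx ψ hψ)).2 (hΓ ψ hψ)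
  induction h generalizing ρ with
  | em φ => exact Classical.em _
  | hyp h => exact hΓ _ h
  | botE _ ih => exact (ih hΓ).elim
  | andI _ _ ihφ ihψ => exact ⟨ihφ hΓ, ihψ hΓ⟩
  | andE1 _ ih => exact (ih hΓ).1
  | andE2 _ ih => exact (ih hΓ).2
  | orI1 _ ih => exact .inl (ih hΓ)
  | orI2 _ ih => exact .inr (ih hΓ)
  | orE _ _ _ ih ihφ ihψ =>
    exact (ih hΓ).elim (fun h => ihφ (List.forall_mem_cons.2 ⟨h, hΓ⟩))
      fun h => ihψ (List.forall_mem_cons.2 ⟨h, hΓ⟩)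
  | impI _ ih => exact fun h => ih (List.forall_mem_cons.2 ⟨h, hΓ⟩)
  | impE _ _ ih ihφ => exact ih hΓ (ihφ hΓ)
  | allI _ hx ih => exact fun a => ih (update_context a hΓ hx)
  | allE t _ ht ih => exact (trueStd_msub_sub1 ht).2 (ih hΓ _)
  | exI t _ ht ih => exact ⟨_, (trueStd_msub_sub1 ht).1 (ih hΓ)⟩
  | exE _ _ hχ hx ih ihχ =>
    obtain ⟨a, ha⟩ := ih hΓ
    exact (trueStd_update_of_notMem hχ).1
      (ihχ (List.forall_mem_cons.2 ⟨ha, update_context a hΓ hx⟩))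

/-! ### Cantor coding -/

theorem cpair_zero_succ (y : ℕ) : cpair 0 (y + 1) = cpair y 0 + 1 := by
  have h : (y + 1) * (y + 1 + 1) = y * (y + 1) + (y + 1) * 2 := by ring
  simp only [cpair, Nat.zero_add, Nat.add_zero, h, Nat.add_mul_div_right _ _ Nat.two_pos,
    Nat.add_assoc]

theorem cpair_succ_left (x y : ℕ) : cpair (x + 1) y = cpair x (y + 1) + 1 := by
  simp only [cpair, Nat.add_right_comm x 1 y, ← Nat.add_assoc]

theorem lrAux_cpair (x y : ℕ) : lrAux (cpair x y) = (x, y) := by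
  obtain ⟨n, hn⟩ : ∃ n, x + y = n := ⟨_, rfl⟩
  induction n generalizing x y with
  | zero =>
    obtain ⟨rfl, rfl⟩ := Nat.add_eq_zero_iff.1 hn
    rfl
  | succ n ih =>
    induction x generalizing y with
    | zero =>
      obtain rfl : y = n + 1 := by omega
      rw [cpair_zero_succ, lrAux, ih n 0 rfl]
      rfl
    | succ x ihx => simp [cpair_succ_left, lrAux, ihx (y + 1) (by omega)]

theorem cl_cpair (x y : ℕ) : cl (cpair x y) = x := by rw [cl, lrAux_cpair]

theorem cr_cpair (x y : ℕ) : cr (cpair x y) = y := by rw [cr, lrAux_cpair]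

theorem lstar_succ_eq (v y : ℕ) : lstar v (y + 1) = lstar (cl v) y := by
  induction y with
  | zero => rfl
  | succ y ih => exact congrArg cl ih

theorem exists_g_eq (n : ℕ) (f : ℕ → ℕ) : ∃ v, ∀ x < n, g v x = f x := by
  induction n generalizing f with
  | zero => exact ⟨0, fun x hx => absurd hx x.not_lt_zero⟩
  | succ n ih =>
    obtain ⟨w, hw⟩ := ih fun x => f (x + 1)
    refine ⟨cpair w (f 0), fun x hx => ?_⟩
    cases x with
    | zero => exact cr_cpair w (f 0)
    | succ x =>
      rw [g, lstar_succ_eq, cl_cpair]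
      exact hw x (Nat.lt_of_succ_lt_succ hx)

/-! ### The ternary formula `G` and the truth of `Q` -/

/-- `G(a,b,c)`, for a formula `G` with the distinguished variables `0,1,2`. The formulas `Gzxy G`,
`Hfml G` and `PhiX G` are built from renamings of this form. -/
def PFml.rename₃ (G : PFml) (a b c : ℕ) : PFml :=
  G.msub fun v => if v = 0 then .var a else if v = 1 then .var b else
    if v = 2 then .var c else .var v

/-- `Φ(x) = ∃y (Z(y) & G(x,x,y))` with `y` the variable `1`; in particular `phi G 0` is `PhiX G`. -/
def phi (G : PFml) (x : ℕ) : PFml := .ex 1 ((vZ (.var 1)).and (G.rename₃ x x 1))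

section Ternary

variable {G : PFml}

theorem PFml.freeForM_of_lt {φ : PFml} {s : ℕ → PTerm} {n : ℕ} (hbv : ∀ v ∈ φ.bv, n ≤ v)
    (hs : ∀ v ∈ φ.fv, ∀ w ∈ (s v).fv, w < n) : φ.FreeForM s :=
  PFml.freeForM_of_disjoint_bv fun v hv =>
    .inr fun w hw hwbv => (hs v hv w hw).not_ge (hbv w hwbv)

theorem PFml.bv_rename₃ (a b c : ℕ) : (G.rename₃ a b c).bv = G.bv := G.bv_msub

variable (hfv : G.fv ⊆ {0, 1, 2}) (hbv : ∀ v ∈ G.bv, 10 ≤ v)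
include hfv

theorem PFml.forall_mem_fv_of_subset {p : ℕ → Prop} (h₀ : p 0) (h₁ : p 1) (h₂ : p 2) :
    ∀ v ∈ G.fv, p v := fun v hv => by
  have hv012 := hfv hv
  simp only [Finset.mem_insert, Finset.mem_singleton] at hv012
  rcases hv012 with rfl | rfl | rfl <;> assumption

theorem PFml.msub_eq_rename₃ {s : ℕ → PTerm} {a b c : ℕ} (ha : s 0 = .var a) (hb : s 1 = .var b)
    (hc : s 2 = .var c) : G.msub s = G.rename₃ a b c :=
  PFml.msub_congr (PFml.forall_mem_fv_of_subset hfv ha hb hc)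

theorem PFml.rename₃_self : G.rename₃ 0 1 2 = G :=
  (PFml.msub_eq_rename₃ hfv rfl rfl rfl).symm.trans G.msub_var

theorem PFml.mem_fv_rename₃ {a b c v : ℕ} (hv : v ∈ (G.rename₃ a b c).fv) :
    v = a ∨ v = b ∨ v = c := by
  obtain ⟨w, hw, hvw⟩ := PFml.mem_fv_msub hv
  revert w
  refine PFml.forall_mem_fv_of_subset hfv ?_ ?_ ?_ <;> simp +contextual [PTerm.fv]

theorem fv_phi_subset (x : ℕ) : (phi G x).fv ⊆ {x} := fun v hv => by
  obtain ⟨hv1, hv⟩ := Finset.mem_erase.1 hv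
  rcases Finset.mem_union.1 hv with hv | hv
  · simp [vZ, PFml.fv, PTerm.fv, hv1] at hv
  · have := PFml.mem_fv_rename₃ hfv hv
    simp_all

theorem A26_eq : A26 G =
    alls [0, 1, 2, 3] (((G.rename₃ 0 1 2).and (G.rename₃ 0 1 3)).imp (vE (.var 2) (.var 3))) := by
  rw [A26, PFml.msub_eq_rename₃ hfv (s := sub1 2 (.var 3)) rfl rfl rfl, PFml.rename₃_self hfv]

include hbv

theorem PFml.freeForM_rename₃ {a b c : ℕ} (ha : a < 10) (hb : b < 10) (hc : c < 10) :
    G.FreeForM fun v => if v = 0 then .var a else if v = 1 then .var b else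
      if v = 2 then .var c else .var v :=
  PFml.freeForM_of_lt hbv <| PFml.forall_mem_fv_of_subset hfv
    (by simpa [PTerm.fv]) (by simpa [PTerm.fv]) (by simpa [PTerm.fv])

theorem PFml.rename₃_msub {s : ℕ → PTerm} {a b c a' b' c' : ℕ} (ha : s a = .var a')
    (hb : s b = .var b') (hc : s c = .var c') (ha10 : a < 10 := by decide)
    (hb10 : b < 10 := by decide) (hc10 : c < 10 := by decide) :
    (G.rename₃ a b c).msub s = G.rename₃ a' b' c' := by
  rw [PFml.rename₃, PFml.msub_msub (PFml.freeForM_rename₃ hfv hbv ha10 hb10 hc10)]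
  exact PFml.msub_eq_rename₃ hfv ha hb hc

theorem trueStd_rename₃ (hdef : ∀ ρ : ℕ → ℕ, TrueStd ρ G ↔ K (ρ 0) (ρ 1) = Part.some (ρ 2))
    {ρ : ℕ → ℕ} (a b c : ℕ) (ha : a < 10 := by decide) (hb : b < 10 := by decide)
    (hc : c < 10 := by decide) :
    TrueStd ρ (G.rename₃ a b c) ↔ K (ρ a) (ρ b) = Part.some (ρ c) := by
  rw [PFml.rename₃, trueStd_msub (PFml.freeForM_rename₃ hfv hbv ha hb hc), hdef]
  rfl

end Ternary

theorem trueStd_B40 {B : PFml} (hfv : B.fv ⊆ {0, 1}) (hbv : ∀ v ∈ B.bv, 10 ≤ v)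
    (hdef : ∀ ρ : ℕ → ℕ, TrueStd ρ B ↔ g (ρ 0) (ρ 1) = 1) {ρ : ℕ → ℕ} :
    TrueStd ρ (B40 B) ↔ g (ρ 4) (ρ 0) = 1 := by
  rw [B40, trueStd_msub, hdef]
  · rfl
  · refine PFml.freeForM_of_lt hbv fun v hv => ?_
    have := hfv hv
    simp only [Finset.mem_insert, Finset.mem_singleton] at this
    rcases this with rfl | rfl <;> simp [PTerm.fv]

section AtomTruth

variable {ρ : ℕ → ℕ} {a b c : ℕ}

theorem trueStd_vZ : TrueStd ρ (vZ (.var a)) ↔ ρ a = 0 := Iff.rfl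

theorem trueStd_vE : TrueStd ρ (vE (.var a) (.var b)) ↔ ρ a = ρ b := Iff.rfl

theorem trueStd_vS : TrueStd ρ (vS (.var a) (.var b)) ↔ ρ a + 1 = ρ b := Iff.rfl

theorem trueStd_vA : TrueStd ρ (vA (.var a) (.var b) (.var c)) ↔ ρ a + ρ b = ρ c := Iff.rfl

theorem trueStd_vM : TrueStd ρ (vM (.var a) (.var b) (.var c)) ↔ ρ a * ρ b = ρ c := Iff.rfl

theorem trueStd_leF {z x y : ℕ} (hx : x ≠ z) (hy : y ≠ z) :
    TrueStd ρ (leF z x (.var y)) ↔ ρ x ≤ ρ y := by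
  simp [leF, TrueStd, trueStd_vA, hx, hy, le_iff_exists_add', eq_comm]

end AtomTruth

theorem trueStd_of_mem_IRAstarAxioms (ρ : ℕ → ℕ) : ∀ φ ∈ IRAstarAxioms, TrueStd ρ φ := by
  simp only [IRAstarAxioms, List.forall_mem_cons, alls, List.foldr, TrueStd, trueStd_not,
    trueStd_vZ, trueStd_vE, trueStd_vS, trueStd_vA, trueStd_vM]
  simp +contextual [← Nat.add_assoc, Nat.mul_succ, Nat.eq_zero_or_pos]

section TruthOfQ

variable {G B : PFml} (hGfv : G.fv ⊆ {0, 1, 2}) (hGbv : ∀ v ∈ G.bv, 10 ≤ v)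
  (hGdef : ∀ ρ : ℕ → ℕ, TrueStd ρ G ↔ K (ρ 0) (ρ 1) = Part.some (ρ 2))
  (hBfv : B.fv ⊆ {0, 1}) (hBbv : ∀ v ∈ B.bv, 10 ≤ v)
  (hBdef : ∀ ρ : ℕ → ℕ, TrueStd ρ B ↔ g (ρ 0) (ρ 1) = 1)
include hGfv hGbv hGdef

theorem trueStd_A26 (ρ : ℕ → ℕ) : TrueStd ρ (A26 G) := by
  simp only [A26_eq hGfv, alls, List.foldr, TrueStd, trueStd_vE,
    trueStd_rename₃ hGfv hGbv hGdef 0 1 2, trueStd_rename₃ hGfv hGbv hGdef 0 1 3]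
  rintro x y z₁ z₂ ⟨h₁, h₂⟩
  exact Part.some_injective (h₁.symm.trans h₂)

theorem trueStd_Hfml {ρ : ℕ → ℕ} : TrueStd ρ (Hfml G) ↔ K (ρ 1) (ρ 0) = Part.some 0 := by
  change (∃ a, a = 0 ∧ TrueStd (Function.update ρ 5 a) (G.rename₃ 1 0 5)) ↔ _
  simp [trueStd_rename₃ hGfv hGbv hGdef 1 0 5]

include hBfv hBbv hBdef

open Classical in
theorem trueStd_A27 (ρ : ℕ → ℕ) : TrueStd ρ (A27 G B) := by
  intro y z
  obtain ⟨v, hv⟩ := exists_g_eq (z + 1) fun x => if K y x = Part.some 0 then 1 else 0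
  refine not_not_intro ⟨v, fun x hx => ?_⟩
  have hxz : x ≤ z := (trueStd_leF (by decide) (by decide)).1 hx
  rw [trueStd_iff, trueStd_B40 hBfv hBbv hBdef, trueStd_Hfml hGfv hGbv hGdef]
  simp [hv x (Nat.lt_succ_of_le hxz)]

theorem trueStd_Qfml (ρ : ℕ → ℕ) : TrueStd ρ (Qfml G B) := by
  refine trueStd_bigAnd.2 <| List.forall_mem_append.2
    ⟨trueStd_of_mem_IRAstarAxioms ρ, List.forall_mem_cons.2 ⟨trueStd_A26 hGfv hGbv hGdef ρ,
      List.forall_mem_cons.2 ⟨trueStd_A27 hGfv hGbv hGdef hBfv hBbv hBdef ρ,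
        List.forall_mem_singleton.2 ?_⟩⟩⟩
  exact fun _ _ => Classical.em _

theorem not_CQC_PsiStar : ¬ CQC [] (PsiStar G B) := fun h =>
  h.sound (ρ := rho0) (by simp) (trueStd_Qfml hGfv hGbv hGdef hBfv hBbv hBdef rho0)
    fun _ => (Classical.em _).symm

end TruthOfQ

/-! ### Derivations in the intuitionistic calculus -/

section Alls

variable (xs : List ℕ) (φ : PFml)

theorem bv_alls : (alls xs φ).bv = xs.toFinset ∪ φ.bv := by
  induction xs with
  | nil => simp [alls]
  | cons x xs ih =>
    change insert x (alls xs φ).bv = _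
    simp [ih]

theorem fv_alls : (alls xs φ).fv = φ.fv \ xs.toFinset := by
  induction xs with
  | nil => simp [alls]
  | cons x xs ih =>
    change (alls xs φ).fv.erase x = _
    rw [ih, List.toFinset_cons, Finset.sdiff_insert]

theorem closed_alls_iff : (alls xs φ).Closed ↔ ∀ v ∈ φ.fv, v ∈ xs := by
  rw [PFml.Closed, fv_alls, Finset.sdiff_eq_empty_iff_subset]
  simp [Finset.subset_iff]

variable {xs}

theorem alls_msub {s : ℕ → PTerm} (hs : ∀ v ∈ xs, s v = .var v) :
    (alls xs φ).msub s = alls xs (φ.msub s) := by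
  induction xs with
  | nil => rfl
  | cons x xs ih =>
    rw [List.forall_mem_cons] at hs
    have hsx : (fun v => if v = x then PTerm.var x else s v) = s := by
      funext v
      split_ifs with hv
      · rw [hv, hs.1]
      · rfl
    change PFml.all x ((alls xs φ).msub _) = PFml.all x (alls xs (φ.msub s))
    rw [hsx, ih hs.2]

end Alls

theorem PFml.Closed.notMem {φ : PFml} (h : φ.Closed) (x : ℕ) : x ∉ φ.fv := by
  rw [PFml.Closed] at h
  simp [h]

theorem closed_bigAnd {l : List PFml} (h : ∀ φ ∈ l, φ.Closed) : (bigAnd l).Closed := by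
  induction l with
  | nil => rfl
  | cons φ l ih =>
    rw [List.forall_mem_cons] at h
    exact Finset.union_eq_empty.2 ⟨h.1, ih h.2⟩

theorem exists_forall_mem_lt (l : List (Finset ℕ)) : ∃ N, ∀ F ∈ l, ∀ u ∈ F, u < N :=
  ((Filter.eventually_all_finite l.finite_toSet).2 fun F _ => (Filter.eventually_all_finset F).2
    fun u _ => Filter.eventually_gt_atTop u).exists

namespace IQC

variable {Γ : List PFml} {p q r p' q' : PFml} {x : ℕ}

theorem toMQC {G B φ : PFml} (h : IQC Γ φ) : MQC G B Γ φ := by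
  induction h with
  | hyp h => exact .hyp h
  | botE _ ih => exact .botE ih
  | andI _ _ ih₁ ih₂ => exact .andI ih₁ ih₂
  | andE1 _ ih => exact .andE1 ih
  | andE2 _ ih => exact .andE2 ih
  | orI1 _ ih => exact .orI1 ih
  | orI2 _ ih => exact .orI2 ih
  | orE _ _ _ ih₁ ih₂ ih₃ => exact .orE ih₁ ih₂ ih₃
  | impI _ ih => exact .impI ih
  | impE _ _ ih₁ ih₂ => exact .impE ih₁ ih₂
  | allI _ hx ih => exact .allI ih hx
  | allE t _ ht ih => exact .allE t ih ht
  | exI t _ ht ih => exact .exI t ih ht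
  | exE _ _ hχ hx ih₁ ih₂ => exact .exE ih₁ ih₂ hχ hx

theorem hyp₀ : IQC (p :: Γ) p := .hyp (by simp)

theorem hyp₁ : IQC (q :: p :: Γ) p := .hyp (by simp)

theorem hyp₂ : IQC (r :: q :: p :: Γ) p := .hyp (by simp)

theorem cut (hp : IQC Γ p) (hq : IQC (p :: Γ) q) : IQC Γ q := .impE (.impI hq) hp

theorem allE_self (h : IQC Γ (.all x p)) : IQC Γ p :=
  p.msub_sub1_self x ▸ .allE (.var x) h (p.freeForM_sub1_self x)

theorem exI_self (h : IQC Γ p) : IQC Γ (.ex x p) :=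
  .exI (.var x) (by rwa [p.msub_sub1_self]) (p.freeForM_sub1_self x)

theorem of_bigAnd {l : List PFml} (hp : p ∈ l) (h : IQC Γ (bigAnd l)) : IQC Γ p := by
  induction l with
  | nil => cases hp
  | cons a l ih =>
    rcases List.mem_cons.1 hp with rfl | hp
    · exact .andE1 h
    · exact ih hp (.andE2 h)

theorem imp_refl : IQC Γ (p.imp p) := .impI hyp₀

/-! The calculus has no weakening rule, since a weakened context may violate an eigenvariable
condition. So each of the following rules is obtained by applying a tautology, which is derivable in
every context. -/

theorem imp_trans (hpq : IQC Γ (p.imp q)) (hqr : IQC Γ (q.imp r)) : IQC Γ (p.imp r) :=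
  have taut : IQC Γ ((p.imp q).imp ((q.imp r).imp (p.imp r))) :=
    .impI (.impI (.impI (.impE hyp₁ (.impE hyp₂ hyp₀))))
  .impE (.impE taut hpq) hqr

theorem curry_left (h : IQC Γ ((p.and q).imp r)) (hp : IQC Γ p) : IQC Γ (q.imp r) :=
  have taut : IQC Γ (((p.and q).imp r).imp (p.imp (q.imp r))) :=
    .impI (.impI (.impI (.impE hyp₂ (.andI hyp₁ hyp₀))))
  .impE (.impE taut h) hp

theorem curry_right (h : IQC Γ ((p.and q).imp r)) (hq : IQC Γ q) : IQC Γ (p.imp r) :=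
  have taut : IQC Γ (((p.and q).imp r).imp (q.imp (p.imp r))) :=
    .impI (.impI (.impI (.impE hyp₂ (.andI hyp₀ hyp₁))))
  .impE (.impE taut h) hq

theorem and_mono (hp : IQC Γ (p.imp p')) (hq : IQC Γ (q.imp q')) :
    IQC Γ ((p.and q).imp (p'.and q')) :=
  have taut : IQC Γ ((p.imp p').imp ((q.imp q').imp ((p.and q).imp (p'.and q')))) :=
    .impI (.impI (.impI (.andI (.impE hyp₂ (.andE1 hyp₀)) (.impE hyp₁ (.andE2 hyp₀)))))
  .impE (.impE taut hp) hq

theorem or_imp (hp : IQC Γ (p.imp r)) (hq : IQC Γ (q.imp r)) : IQC Γ ((p.or q).imp r) :=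
  have taut : IQC Γ ((p.imp r).imp ((q.imp r).imp ((p.or q).imp r))) :=
    .impI (.impI (.impI (.orE hyp₀ (.impE (.hyp (by simp)) hyp₀) (.impE hyp₂ hyp₀))))
  .impE (.impE taut hp) hq

theorem or_mono (hp : IQC Γ (p.imp p')) (hq : IQC Γ (q.imp q')) :
    IQC Γ ((p.or q).imp (p'.or q')) :=
  or_imp (imp_trans hp (.impI (.orI1 hyp₀))) (imp_trans hq (.impI (.orI2 hyp₀)))

theorem imp_mono (hp : IQC Γ (p'.imp p)) (hq : IQC Γ (q.imp q')) :
    IQC Γ ((p.imp q).imp (p'.imp q')) :=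
  have taut : IQC Γ ((p'.imp p).imp ((q.imp q').imp ((p.imp q).imp (p'.imp q')))) :=
    .impI (.impI (.impI (.impI (.impE hyp₂ (.impE hyp₁ (.impE (.hyp (by simp)) hyp₀))))))
  .impE (.impE taut hp) hq

theorem all_mono (h : IQC Γ (p.imp q)) (hx : ∀ ψ ∈ Γ, x ∉ ψ.fv) :
    IQC Γ ((PFml.all x p).imp (.all x q)) :=
  have taut : IQC Γ ((PFml.all x (p.imp q)).imp ((PFml.all x p).imp (.all x q))) :=
    .impI (.impI (.allI (.impE (allE_self hyp₁) (allE_self hyp₀))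
      (by simpa [PFml.fv] using hx)))
  .impE taut (.allI h hx)

theorem ex_imp (h : IQC Γ (p.imp q)) (hq : x ∉ q.fv) (hx : ∀ ψ ∈ Γ, x ∉ ψ.fv) :
    IQC Γ ((PFml.ex x p).imp q) :=
  have taut : IQC Γ ((PFml.all x (p.imp q)).imp ((PFml.ex x p).imp q)) :=
    .impI (.impI (.exE hyp₀ (.impE (allE_self hyp₂) hyp₀) hq (by simpa [PFml.fv] using hx)))
  .impE taut (.allI h hx)

theorem ex_mono (h : IQC Γ (p.imp q)) (hx : ∀ ψ ∈ Γ, x ∉ ψ.fv) :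
    IQC Γ ((PFml.ex x p).imp (.ex x q)) :=
  ex_imp (imp_trans h (.impI (exI_self hyp₀))) (by simp [PFml.fv]) hx

theorem iff_mono (hp : IQC Γ (p.iff p')) (hq : IQC Γ (q.iff q')) :
    IQC Γ ((p.iff q).imp (p'.iff q')) :=
  and_mono (imp_mono (.andE2 hp) (.andE1 hq)) (imp_mono (.andE2 hq) (.andE1 hp))

theorem not_congr (h : IQC Γ (p.iff q)) : IQC Γ (p.not.iff q.not) :=
  .andI (.impE (.impI (imp_mono (.andE2 hyp₀) imp_refl)) h)
    (.impE (.impI (imp_mono (.andE1 hyp₀) imp_refl)) h)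

theorem alls_intro {xs : List ℕ} (h : IQC Γ p) (hxs : ∀ x ∈ xs, ∀ ψ ∈ Γ, x ∉ ψ.fv) :
    IQC Γ (alls xs p) := by
  induction xs with
  | nil => exact h
  | cons x xs ih =>
    rw [List.forall_mem_cons] at hxs
    exact .allI (ih hxs.2) hxs.1

theorem alls_elim_of_fresh (s : ℕ → PTerm) {xs : List ℕ} (hxs : xs.Nodup) {φ : PFml}
    (hs : ∀ x ∈ xs, ∀ u ∈ (s x).fv, u ∉ xs ∧ u ∉ φ.bv) (h : IQC Γ (alls xs φ)) :
    IQC Γ (φ.msub fun v => if v ∈ xs then s v else .var v) := by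
  induction xs generalizing φ with
  | nil => rwa [φ.msub_eq_self (by simp)]
  | cons x xs ih =>
    rw [List.nodup_cons] at hxs
    have hsx : ∀ u ∈ (s x).fv, u ∉ xs ∧ u ∉ φ.bv := fun u hu => by
      have := hs x (by simp) u hu
      simp_all
    have hx : IQC Γ ((alls xs φ).msub (sub1 x (s x))) :=
      .allE (s x) h (PFml.freeForM_sub1 fun u hu => by simpa [bv_alls] using hsx u hu)
    rw [alls_msub (s := sub1 x (s x)) φ fun v hv => if_neg (ne_of_mem_of_not_mem hv hxs.1)] at hx
    have hxxs := ih hxs.2 (fun y hy u hu => by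
      have := hs y (by simp [hy]) u hu
      simp_all [PFml.bv_msub]) hx
    rw [PFml.msub_msub (PFml.freeForM_sub1 fun u hu => (hsx u hu).2)] at hxxs
    convert hxxs using 2
    funext v
    by_cases hvx : v = x
    · subst hvx
      have hself : (s v).msub (fun u => if u ∈ xs then s u else .var u) = s v :=
        (PTerm.msub_congr fun u hu => if_neg (hsx u hu).1).trans (PTerm.msub_var _)
      simp [sub1, hself]
    · simp [sub1, hvx, PTerm.msub]

/- The quantifiers are first instantiated with fresh variables `N + x`: the terms `s x` may contain
the variables `xs` being replaced. -/
theorem alls_elim (s : ℕ → PTerm) {xs : List ℕ} (hxs : xs.Nodup) {φ : PFml}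
    (hφ : ∀ v ∈ φ.fv, v ∈ xs) (hs : ∀ x ∈ xs, ∀ u ∈ (s x).fv, u ∉ φ.bv)
    (h : IQC Γ (alls xs φ)) : IQC Γ (φ.msub s) := by
  obtain ⟨N, hN⟩ := exists_forall_mem_lt
    (φ.bv :: xs.toFinset :: (Γ.map PFml.fv ++ xs.map fun x => (s x).fv))
  simp only [List.forall_mem_cons, List.forall_mem_append, List.forall_mem_map,
    List.mem_toFinset] at hN
  obtain ⟨hNφ, hNxs, hNΓ, hNs⟩ := hN
  have hfresh : IQC Γ (φ.msub fun v => if v ∈ xs then .var (N + v) else .var v) := by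
    refine alls_elim_of_fresh _ hxs (fun x _ u hu => ?_) h
    obtain rfl : u = N + x := by simpa [PTerm.fv] using hu
    exact ⟨fun hu => (hNxs _ hu).not_ge le_self_add, fun hu => (hNφ _ hu).not_ge le_self_add⟩
  have hfree : φ.FreeForM fun v => if v ∈ xs then .var (N + v) else .var v :=
    PFml.freeForM_of_disjoint_bv fun v hv => .inr fun u hu hubv => by
      obtain rfl : u = N + v := by simpa [hφ v hv, PTerm.fv] using hu
      exact (hNφ _ hubv).not_ge le_self_add
  have hgen := alls_intro (xs := xs.map (N + ·)) hfresh fun y hy ψ hψ hyψ => by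
    obtain ⟨x, -, rfl⟩ := List.mem_map.1 hy
    exact (hNΓ ψ hψ _ hyψ).not_ge le_self_add
  have hinst := alls_elim_of_fresh (fun y => s (y - N))
    (hxs.map (add_right_injective N)) (fun y hy u hu => by
      obtain ⟨x, hx, rfl⟩ := List.mem_map.1 hy
      rw [Nat.add_sub_cancel_left] at hu
      refine ⟨fun humap => ?_, by simpa [PFml.bv_msub] using hs x hx u hu⟩
      obtain ⟨x', -, rfl⟩ := List.mem_map.1 humap
      exact (hNs x hx _ hu).not_ge le_self_add) hgen
  rw [PFml.msub_msub hfree] at hinst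
  convert hinst using 1
  exact PFml.msub_congr fun v hv => by simp [hφ v hv, PTerm.msub]

end IQC

/-! ### Congruence for arithmetical formulas -/

/-- The formulas all of whose atoms are built from the arithmetical predicate variables `Z`, `E`,
`S`, `A`, `M`. For these the axioms of Robinson arithmetic make `E` a congruence. -/
def PFml.IsArithmetical : PFml → Prop
  | .bot => True
  | .atom i args => arithSlot args.length i
  | .and φ ψ => φ.IsArithmetical ∧ ψ.IsArithmetical
  | .or φ ψ => φ.IsArithmetical ∧ ψ.IsArithmetical
  | .imp φ ψ => φ.IsArithmetical ∧ ψ.IsArithmetical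
  | .all _ φ => φ.IsArithmetical
  | .ex _ φ => φ.IsArithmetical

section IsArithmetical

open PFml

variable {φ : PFml}

theorem isArithmetical_leF (z x : ℕ) (t : PTerm) : (leF z x t).IsArithmetical := by
  simp [leF, IsArithmetical, vA, arithSlot]

theorem IsDelta0.isArithmetical (h : IsDelta0 φ) : φ.IsArithmetical := by
  induction h with
  | bot => trivial
  | atom h => exact h
  | and _ _ ihφ ihψ => exact ⟨ihφ, ihψ⟩
  | or _ _ ihφ ihψ => exact ⟨ihφ, ihψ⟩
  | imp _ _ ihφ ihψ => exact ⟨ihφ, ihψ⟩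
  | ball _ _ _ _ ih => exact ⟨isArithmetical_leF _ _ _, ih⟩
  | bex _ _ _ _ ih => exact ⟨isArithmetical_leF _ _ _, ih⟩

theorem IsSigma.isArithmetical (h : IsSigma φ) : φ.IsArithmetical := by
  induction h with
  | delta0 h => exact h.isArithmetical
  | and _ _ ihφ ihψ => exact ⟨ihφ, ihψ⟩
  | or _ _ ihφ ihψ => exact ⟨ihφ, ihψ⟩
  | ball _ _ _ _ ih => exact ⟨isArithmetical_leF _ _ _, ih⟩
  | bex _ _ _ _ ih => exact ⟨isArithmetical_leF _ _ _, ih⟩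
  | ex _ ih => exact ih

theorem PFml.isArithmetical_msub {s : ℕ → PTerm} :
    (φ.msub s).IsArithmetical ↔ φ.IsArithmetical := by
  induction φ generalizing s <;> simp_all [PFml.msub, IsArithmetical]

theorem isArithmetical_alls {xs : List ℕ} : (alls xs φ).IsArithmetical ↔ φ.IsArithmetical := by
  induction xs with
  | nil => rfl
  | cons _ _ ih => exact ih

theorem isArithmetical_bigAnd {l : List PFml} (h : ∀ φ ∈ l, φ.IsArithmetical) :
    (bigAnd l).IsArithmetical := by
  induction l with
  | nil => exact ⟨trivial, trivial⟩
  | cons φ l ih =>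
    rw [List.forall_mem_cons] at h
    exact ⟨h.1, ih h.2⟩

theorem isArithmetical_Qfml {G B : PFml} (hG : G.IsArithmetical) (hB : B.IsArithmetical) :
    (Qfml G B).IsArithmetical := by
  refine isArithmetical_bigAnd <| List.forall_mem_append.2 ⟨?_, ?_⟩
  · simp only [IRAstarAxioms, List.forall_mem_cons]
    simp [isArithmetical_alls, IsArithmetical, vZ, vE, vS, vA, vM, arithSlot, PFml.not]
  · simp [A26, A27, A28, isArithmetical_alls, IsArithmetical, hG, hB, isArithmetical_msub, vE, vZ,
      arithSlot, PFml.not, PFml.iff, B40, Hfml, isArithmetical_leF]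

end IsArithmetical

/-- Reflexivity of `E`, which is derivable from the axioms of Robinson arithmetic. -/
def eqRefl : PFml := .all 0 (vE (.var 0) (.var 0))

namespace IQC

variable {G B : PFml} {Γ : List PFml} (hQ : Qfml G B ∈ Γ)
include hQ

theorem of_mem_IRAstarAxioms {φ : PFml} (hφ : φ ∈ IRAstarAxioms) : IQC Γ φ :=
  of_bigAnd (List.mem_append_left _ hφ) (.hyp hQ)

theorem IRAstar_instance (k : ℕ) {n : ℕ} {φ : PFml} (s : ℕ → PTerm)
    (hk : IRAstarAxioms[k]? = some (alls (List.range n) φ))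
    (hfv : ∀ v ∈ φ.fv, v ∈ List.range n := by decide) (hbv : φ.bv = ∅ := by decide) :
    IQC Γ (φ.msub s) :=
  alls_elim s List.nodup_range hfv (by simp [hbv])
    (of_mem_IRAstarAxioms hQ (List.mem_of_getElem? hk))

theorem vE_eucl (t u w : PTerm) : IQC Γ (((vE t u).and (vE t w)).imp (vE u w)) :=
  IRAstar_instance (n := 3) hQ 2 (argSub [t, u, w]) rfl

variable {a b c a' b' c' : PTerm} (ha : IQC Γ (vE a a'))
include ha

theorem vZ_congr : IQC Γ ((vZ a).imp (vZ a')) :=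
  curry_left (IRAstar_instance (n := 2) hQ 15 (argSub [a, a']) rfl) ha

variable (hb : IQC Γ (vE b b'))
include hb

theorem vE_congr : IQC Γ ((vE a b).imp (vE a' b')) :=
  imp_trans (curry_right (vE_eucl hQ a b a') ha) (curry_right (vE_eucl hQ b a' b') hb)

theorem vS_congr : IQC Γ ((vS a b).imp (vS a' b')) :=
  imp_trans (curry_left (IRAstar_instance (n := 3) hQ 3 (argSub [a, a', b]) rfl) ha)
    (curry_right (IRAstar_instance (n := 3) hQ 18 (argSub [a', b, b']) rfl) hb)

variable (hc : IQC Γ (vE c c'))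
include hc

theorem vA_congr : IQC Γ ((vA a b c).imp (vA a' b' c')) :=
  imp_trans (curry_left (IRAstar_instance (n := 4) hQ 8 (argSub [a, a', b, c]) rfl) ha) <|
    imp_trans (curry_left (IRAstar_instance (n := 4) hQ 9 (argSub [a', b, b', c]) rfl) hb) <|
      curry_right (IRAstar_instance (n := 4) hQ 21 (argSub [a', b', c, c']) rfl) hc

theorem vM_congr : IQC Γ ((vM a b c).imp (vM a' b' c')) :=
  imp_trans (curry_left (IRAstar_instance (n := 4) hQ 10 (argSub [a, a', b, c]) rfl) ha) <|
    imp_trans (curry_left (IRAstar_instance (n := 4) hQ 11 (argSub [a', b, b', c]) rfl) hb) <|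
      curry_right (IRAstar_instance (n := 4) hQ 24 (argSub [a', b', c, c']) rfl) hc

end IQC

namespace IQC

variable {G B : PFml} {Γ : List PFml}

theorem vE_refl (hR : IQC Γ eqRefl) (t : PTerm) : IQC Γ (vE t t) := .allE t hR trivial

theorem vE_ite (hR : IQC Γ eqRefl) {s s' : ℕ → PTerm} {x v : ℕ}
    (hv : v ≠ x → IQC Γ (vE (s v) (s' v))) :
    IQC Γ (vE (if v = x then .var x else s v) (if v = x then .var x else s' v)) := by
  split_ifs with h
  · exact vE_refl hR _
  · exact hv h

theorem atom_congr (hQ : Qfml G B ∈ Γ) {i : ℕ} {args : List PTerm} (hi : arithSlot args.length i)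
    {s s' : ℕ → PTerm} (hs : ∀ t ∈ args, IQC Γ (vE (t.msub s) (t.msub s'))) :
    IQC Γ (((PFml.atom i args).msub s).imp ((PFml.atom i args).msub s')) := by
  rcases hi with ⟨hlen, rfl⟩ | ⟨hlen, hi⟩ | ⟨hlen, hi⟩
  · obtain ⟨a, rfl⟩ := List.length_eq_one_iff.1 hlen
    exact vZ_congr hQ (hs a (by simp))
  · obtain ⟨a, b, rfl⟩ := List.length_eq_two.1 hlen
    rcases Nat.le_one_iff_eq_zero_or_eq_one.1 hi with rfl | rfl
    · exact vE_congr hQ (hs a (by simp)) (hs b (by simp))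
    · exact vS_congr hQ (hs a (by simp)) (hs b (by simp))
  · obtain ⟨a, b, c, rfl⟩ := List.length_eq_three.1 hlen
    rcases Nat.le_one_iff_eq_zero_or_eq_one.1 hi with rfl | rfl
    · exact vA_congr hQ (hs a (by simp)) (hs b (by simp)) (hs c (by simp))
    · exact vM_congr hQ (hs a (by simp)) (hs b (by simp)) (hs c (by simp))

variable (hQ : Qfml G B ∈ Γ) (hR : IQC Γ eqRefl)
include hQ hR

theorem vE_symm {t u : PTerm} (h : IQC Γ (vE t u)) : IQC Γ (vE u t) :=
  .impE (vE_eucl hQ t u t) (.andI h (vE_refl hR t))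

theorem msub_imp_msub {φ : PFml} (hφ : φ.IsArithmetical) (hbv : ∀ x ∈ φ.bv, ∀ ψ ∈ Γ, x ∉ ψ.fv)
    {s s' : ℕ → PTerm} (hs : ∀ v ∈ φ.fv, IQC Γ (vE (s v) (s' v))) :
    IQC Γ ((φ.msub s).imp (φ.msub s')) := by
  induction φ generalizing s s' with
  | bot => exact imp_refl
  | atom i args =>
    refine atom_congr hQ hφ fun t ht => ?_
    cases t with
    | var v => exact hs v (PFml.mem_fv_atom.2 ⟨_, ht, by simp [PTerm.fv]⟩)
    | const c => exact vE_refl hR _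
  | and φ ψ ihφ ihψ =>
    simp only [PFml.fv, PFml.bv, Finset.forall_mem_union] at hs hbv
    exact and_mono (ihφ hφ.1 hbv.1 hs.1) (ihψ hφ.2 hbv.2 hs.2)
  | or φ ψ ihφ ihψ =>
    simp only [PFml.fv, PFml.bv, Finset.forall_mem_union] at hs hbv
    exact or_mono (ihφ hφ.1 hbv.1 hs.1) (ihψ hφ.2 hbv.2 hs.2)
  | imp φ ψ ihφ ihψ =>
    simp only [PFml.fv, PFml.bv, Finset.forall_mem_union] at hs hbv
    exact imp_mono (ihφ hφ.1 hbv.1 fun v hv => vE_symm hQ hR (hs.1 v hv)) (ihψ hφ.2 hbv.2 hs.2)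
  | all x φ ih =>
    simp only [PFml.fv, PFml.bv, Finset.mem_erase, Finset.forall_mem_insert] at hs hbv
    exact all_mono (ih hφ hbv.2 fun v hv => vE_ite hR fun hvx => hs v ⟨hvx, hv⟩) hbv.1
  | ex x φ ih =>
    simp only [PFml.fv, PFml.bv, Finset.mem_erase, Finset.forall_mem_insert] at hs hbv
    exact ex_mono (ih hφ hbv.2 fun v hv => vE_ite hR fun hvx => hs v ⟨hvx, hv⟩) hbv.1

theorem msub_iff_msub {φ : PFml} (hφ : φ.IsArithmetical) (hbv : ∀ x ∈ φ.bv, ∀ ψ ∈ Γ, x ∉ ψ.fv)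
    {s s' : ℕ → PTerm} (hs : ∀ v ∈ φ.fv, IQC Γ (vE (s v) (s' v))) :
    IQC Γ ((φ.msub s).iff (φ.msub s')) :=
  .andI (msub_imp_msub hQ hR hφ hbv hs)
    (msub_imp_msub hQ hR hφ hbv fun v hv => vE_symm hQ hR (hs v hv))

end IQC

namespace IQC

variable {G B : PFml} {Γ : List PFml} (hΓ : ∀ ψ ∈ Γ, ψ.Closed)
include hΓ

theorem notMem_fv_of_closed (x : ℕ) : ∀ ψ ∈ Γ, x ∉ ψ.fv := fun ψ hψ => (hΓ ψ hψ).notMem x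

variable (hQ : Qfml G B ∈ Γ)
include hQ

/- Two copies of `S(x,y)` with the same `y`, fed into the injectivity of `S`, give `E(x,x)`. -/
theorem eqRefl_of_closed : IQC Γ eqRefl := by
  refine .allI ?_ (notMem_fv_of_closed hΓ 0)
  have hsucc : IQC Γ (.all 0 (.ex 1 (vS (.var 0) (.var 1)))) :=
    of_mem_IRAstarAxioms hQ (List.mem_of_getElem? (i := 16) rfl)
  refine .exE (allE_self hsucc) ?_ (by decide) (notMem_fv_of_closed hΓ 1)
  exact .impE (IRAstar_instance (n := 3) (List.mem_cons_of_mem _ hQ) 0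
    (argSub [.var 0, .var 0, .var 1]) rfl) (.andI hyp₀ hyp₀)

theorem exists_vZ : IQC Γ (.ex 1 (vZ (.var 1))) := by
  have hzero : IQC Γ (.ex 0 (vZ (.var 0))) :=
    of_mem_IRAstarAxioms hQ (List.mem_of_getElem? (i := 13) rfl)
  exact .exE hzero (.exI (φ := vZ (.var 1)) (.var 0) hyp₀ trivial) (by decide)
    (notMem_fv_of_closed hΓ 0)

theorem exists_not_vZ : IQC Γ (.ex 1 (vZ (.var 1)).not) := by
  have hsucc : IQC Γ (.all 0 (.ex 1 (vS (.var 0) (.var 1)))) :=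
    of_mem_IRAstarAxioms hQ (List.mem_of_getElem? (i := 16) rfl)
  refine .exE (allE_self hsucc) (exI_self (.impE ?_ hyp₀)) (by decide) (notMem_fv_of_closed hΓ 1)
  exact IRAstar_instance (n := 2) (List.mem_cons_of_mem _ hQ) 1
    (argSub [.var 0, .var 1]) rfl

end IQC

/-! ### Substitution for predicate variables -/

section SubstP

variable {σ : ℕ → ℕ → PFml}
  (hσ : ∀ n i, arithSlot n i → σ n i = .atom i ((List.range n).map .var))
  (hσfv : ∀ n i, (σ n i).fv ⊆ Finset.range n)
  {φ : PFml}

theorem atom_range_msub_argSub (i : ℕ) (args : List PTerm) :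
    (PFml.atom i ((List.range args.length).map .var)).msub (argSub args) = .atom i args := by
  simp only [PFml.msub, PFml.atom.injEq, true_and]
  refine List.ext_getElem (by simp) fun k _ hk => ?_
  simp [PTerm.msub, argSub, hk]

include hσ in
theorem PFml.IsArithmetical.substP_eq_self (hφ : φ.IsArithmetical) : φ.substP σ = φ := by
  induction φ with
  | bot => rfl
  | atom i args => rw [PFml.substP, hσ _ _ hφ, atom_range_msub_argSub]
  | and φ ψ ihφ ihψ => rw [PFml.substP, ihφ hφ.1, ihψ hφ.2]
  | or φ ψ ihφ ihψ => rw [PFml.substP, ihφ hφ.1, ihψ hφ.2]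
  | imp φ ψ ihφ ihψ => rw [PFml.substP, ihφ hφ.1, ihψ hφ.2]
  | all x φ ih => rw [PFml.substP, ih hφ]
  | ex x φ ih => rw [PFml.substP, ih hφ]

include hσfv

theorem acceptableP_all_iff (x : ℕ) : (PFml.all x φ).AcceptableP σ ↔ φ.AcceptableP σ :=
  and_iff_right fun n i _ hx => by
    rw [Finset.mem_sdiff] at hx
    exact hx.2 (hσfv n i hx.1)

theorem acceptableP_ex_iff (x : ℕ) : (PFml.ex x φ).AcceptableP σ ↔ φ.AcceptableP σ :=
  acceptableP_all_iff hσfv x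

include hσ in
theorem PFml.IsArithmetical.acceptableP (hφ : φ.IsArithmetical) : φ.AcceptableP σ := by
  induction φ with
  | bot => trivial
  | atom i args =>
    rw [PFml.AcceptableP, hσ _ _ hφ]
    trivial
  | and φ ψ ihφ ihψ => exact ⟨ihφ hφ.1, ihψ hφ.2⟩
  | or φ ψ ihφ ihψ => exact ⟨ihφ hφ.1, ihψ hφ.2⟩
  | imp φ ψ ihφ ihψ => exact ⟨ihφ hφ.1, ihψ hφ.2⟩
  | all x φ ih => exact (acceptableP_all_iff hσfv x).2 (ih hφ)
  | ex x φ ih => exact (acceptableP_ex_iff hσfv x).2 (ih hφ)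

end SubstP

/-! ### The diagonal instance of `nCT*` -/

/-- `Z(y) ↔ ¬Φ(x)`: the relation to which Church's thesis is applied. An index `e` of a choice
function for it diagonalizes against itself at `x = e`. -/
def diagRel (G : PFml) (x y : ℕ) : PFml := (vZ (.var y)).iff (phi G x).not

/-- The substitution for the predicate variables of `nCT*` that takes `P` to `⊥` and `Q'` to
`diagRel`. -/
def diagSubst (G : PFml) : ℕ → ℕ → PFml
  | 1, 1 => .bot
  | 2, 2 => diagRel G 0 1
  | n, i => .atom i ((List.range n).map .var)

/-- The equality axiom for the nullary relation `⊥`, taken in the unary form in which it is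
substituted for `P`. -/
def eqBot : PFml := alls [0, 1] ((bigAnd [vE (.var 0) (.var 1)]).imp (PFml.bot.imp .bot))

/-- The equality axiom for `diagRel`. -/
def eqDiagRel (G : PFml) : PFml :=
  alls [0, 1, 2, 3] ((bigAnd [vE (.var 0) (.var 2), vE (.var 1) (.var 3)]).imp
    ((diagRel G 0 1).imp (diagRel G 2 3)))

/-- The premise of the diagonal instance of `nCT`, with `¬P` turned into `¬⊥`. -/
def diagPremise (G : PFml) : PFml := .all 0 (PFml.bot.not.imp (.ex 1 (diagRel G 0 1)))

/-- The conclusion of the diagonal instance of `nCT`, for the index `z`, the variable `2`. -/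
def diagIndex (G : PFml) : PFml :=
  .all 0 (PFml.bot.not.imp (.ex 1 ((G.rename₃ 2 0 1).and (diagRel G 0 1))))

theorem diagSubst_of_arithSlot (G : PFml) (n i : ℕ) (h : arithSlot n i) :
    diagSubst G n i = .atom i ((List.range n).map .var) := by
  unfold diagSubst arithSlot at *
  split <;> first | omega | rfl

section Diagonal

variable {G B : PFml} (hGfv : G.fv ⊆ {0, 1, 2})
include hGfv

theorem notMem_fv_phi {v x : ℕ} (hv : v ≠ x) : v ∉ (phi G x).fv := fun h =>
  hv (Finset.mem_singleton.1 (fv_phi_subset hGfv x h))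

theorem notMem_fv_diagRel {v x y : ℕ} (hx : v ≠ x) (hy : v ≠ y) : v ∉ (diagRel G x y).fv := by
  simp [diagRel, PFml.iff, PFml.not, PFml.fv, vZ, PTerm.fv, notMem_fv_phi hGfv hx, hy]

theorem fv_diagSubst_subset (n i : ℕ) : (diagSubst G n i).fv ⊆ Finset.range n := by
  intro v hv
  unfold diagSubst at hv
  split at hv
  · simp [PFml.fv] at hv
  · contrapose! hv
    rw [Finset.mem_range] at hv
    exact notMem_fv_diagRel hGfv (by omega) (by omega)
  · obtain ⟨t, ht, hvt⟩ := PFml.mem_fv_atom.1 hv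
    obtain ⟨u, hu, rfl⟩ := List.mem_map.1 ht
    simp_all [PTerm.fv]

variable (hGbv : ∀ v ∈ G.bv, 10 ≤ v)
include hGbv

theorem phi_msub {s : ℕ → PTerm} {x y : ℕ} (hs : s x = .var y) (hx : x ≠ 1 := by decide)
    (hx10 : x < 10 := by decide) : (phi G x).msub s = phi G y := by
  simp only [phi, PFml.msub]
  rw [PFml.rename₃_msub hGfv hGbv (s := fun v => if v = 1 then .var 1 else s v) (a' := y) (b' := y)
    (c' := 1) (by simp [hx, hs]) (by simp [hx, hs]) rfl hx10 hx10]
  rfl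

theorem diagRel_msub {s : ℕ → PTerm} {x y x' y' : ℕ} (hx : s x = .var x') (hy : s y = .var y')
    (hx1 : x ≠ 1 := by decide) (hx10 : x < 10 := by decide) :
    (diagRel G x y).msub s = diagRel G x' y' := by
  simp only [diagRel, PFml.iff, PFml.not, PFml.msub, phi_msub hGfv hGbv hx hx1 hx10]
  simp [vZ, PFml.msub, PTerm.msub, hy]

theorem acceptableP_diagSubst_atom (x y : ℕ) (hx : x ≠ 1 := by decide) (hx10 : x < 10 := by decide)
    (hy10 : y < 10 := by decide) : (PFml.atom 2 [.var x, .var y]).AcceptableP (diagSubst G) := by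
  have hbv : ∀ v ∈ (diagRel G 0 1).bv, v = 1 ∨ 10 ≤ v := by
    simp only [diagRel, phi, PFml.iff, PFml.not, vZ, PFml.bv, PFml.bv_rename₃, Finset.mem_union,
      Finset.mem_insert, Finset.notMem_empty, false_or, or_false]
    rintro v ((rfl | hv) | rfl | hv) <;> simp_all
  refine PFml.freeForM_of_disjoint_bv fun v hv => ?_
  have hv01 := Finset.mem_range.1 (fv_diagSubst_subset hGfv 2 2 hv)
  obtain rfl | rfl : v = 0 ∨ v = 1 := by omega
  · refine .inr fun w hw hwbv => ?_
    obtain rfl : w = x := Finset.mem_singleton.1 hw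
    have := hbv w hwbv
    omega
  · rcases eq_or_ne y 1 with rfl | hy
    · exact .inl rfl
    · refine .inr fun w hw hwbv => ?_
      obtain rfl : w = y := Finset.mem_singleton.1 hw
      have := hbv w hwbv
      omega

theorem substP_diagSubst_atom (x y : ℕ) :
    (PFml.atom 2 [.var x, .var y]).substP (diagSubst G) = diagRel G x y :=
  diagRel_msub hGfv hGbv rfl rfl

theorem acceptableP_nCTstar (hG : G.IsArithmetical) (hB : B.IsArithmetical) :
    (nCTstar G B).AcceptableP (diagSubst G) := by
  have hall {φ : PFml} (x : ℕ) := acceptableP_all_iff (φ := φ) (fv_diagSubst_subset hGfv) x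
  have hex {φ : PFml} (x : ℕ) := acceptableP_ex_iff (φ := φ) (fv_diagSubst_subset hGfv) x
  have harith {φ : PFml} (hφ : φ.IsArithmetical) : φ.AcceptableP (diagSubst G) :=
    hφ.acceptableP (diagSubst_of_arithSlot G) (fv_diagSubst_subset hGfv)
  have hE (a b : ℕ) : (vE (.var a) (.var b)).AcceptableP (diagSubst G) :=
    harith (.inr (.inl ⟨rfl, Nat.zero_le _⟩))
  have hQ₀₁ := acceptableP_diagSubst_atom hGfv hGbv 0 1
  have hQ₂₃ := acceptableP_diagSubst_atom hGfv hGbv 2 3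
  have hGzxy : (Gzxy G).AcceptableP (diagSubst G) := harith (PFml.isArithmetical_msub.2 hG)
  refine ⟨⟨harith (isArithmetical_Qfml hG hB), ?_, ?_⟩, ?_, ?_⟩
  · exact (hall 0).2 <| (hall 1).2 ⟨⟨hE 0 1, trivial, trivial⟩, trivial, trivial⟩
  · exact (hall 0).2 <| (hall 1).2 <| (hall 2).2 <| (hall 3).2
      ⟨⟨hE 0 2, hE 1 3, trivial, trivial⟩, hQ₀₁, hQ₂₃⟩
  · exact (hall 0).2 ⟨⟨trivial, trivial⟩, (hex 1).2 hQ₀₁⟩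
  · exact (hex 2).2 <| (hall 0).2 ⟨⟨trivial, trivial⟩, (hex 1).2 ⟨hGzxy, hQ₀₁⟩⟩

theorem isInstance_nCTstar (hG : G.IsArithmetical) (hB : B.IsArithmetical) :
    IsInstance (nCTstar G B) (((Qfml G B).and (eqBot.and (eqDiagRel G))).imp
      ((diagPremise G).imp (.ex 2 (diagIndex G)))) := by
  refine ⟨diagSubst G, acceptableP_nCTstar hGfv hGbv hG hB, ?_⟩
  have hσ := diagSubst_of_arithSlot G
  have hQ₀₁ := substP_diagSubst_atom hGfv hGbv 0 1
  have hQ₂₃ := substP_diagSubst_atom hGfv hGbv 2 3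
  have hEq : (eqAx 2 2).substP (diagSubst G) = eqDiagRel G := by
    rw [eqDiagRel, ← hQ₀₁, ← hQ₂₃]
    rfl
  have hGzxy : (Gzxy G).substP (diagSubst G) = G.rename₃ 2 0 1 :=
    PFml.IsArithmetical.substP_eq_self hσ (PFml.isArithmetical_msub.2 hG)
  have hnCT : (nCTfml G).substP (diagSubst G) = (diagPremise G).imp (.ex 2 (diagIndex G)) := by
    rw [diagPremise, diagIndex, ← hQ₀₁, ← hGzxy]
    rfl
  rw [nCTstar, PFml.substP, PFml.substP, PFml.substP, hEq, hnCT,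
    (isArithmetical_Qfml hG hB).substP_eq_self hσ]
  rfl

end Diagonal

/-! ### The derivation of `Ψ*` -/

section Closed

variable {G B : PFml} (hGfv : G.fv ⊆ {0, 1, 2})

theorem closed_of_mem_IRAstarAxioms : ∀ φ ∈ IRAstarAxioms, φ.Closed := by
  simp only [IRAstarAxioms, List.forall_mem_cons, PFml.Closed]
  decide

include hGfv

theorem closed_A26 : (A26 G).Closed := by
  rw [A26_eq hGfv, closed_alls_iff]
  intro v hv
  simp only [PFml.fv, Finset.mem_union] at hv
  rcases hv with (hv | hv) | hv
  · have := PFml.mem_fv_rename₃ hGfv hv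
    simp only [List.mem_cons]
    omega
  · have := PFml.mem_fv_rename₃ hGfv hv
    simp only [List.mem_cons]
    omega
  · revert v
    decide

variable (hBfv : B.fv ⊆ {0, 1})

theorem fv_Hfml_subset : (Hfml G).fv ⊆ {0, 1} := fun v hv => by
  obtain ⟨hv5, hv⟩ := Finset.mem_erase.1 hv
  rcases Finset.mem_union.1 hv with hv | hv
  · simp [vZ, PFml.fv, PTerm.fv, hv5] at hv
  · have := PFml.mem_fv_rename₃ (a := 1) (b := 0) (c := 5) hGfv hv
    simp
    omega

omit hGfv in
include hBfv in
theorem fv_B40_subset : (B40 B).fv ⊆ {0, 4} := fun v hv => by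
  obtain ⟨w, hw, hvw⟩ := PFml.mem_fv_msub hv
  have hw01 := hBfv hw
  simp only [Finset.mem_insert, Finset.mem_singleton] at hw01
  rcases hw01 with rfl | rfl <;> simp_all [PTerm.fv]

include hBfv

theorem closed_A27 : (A27 G B).Closed := by
  rw [A27, closed_alls_iff]
  intro v hv
  have hH := @fv_Hfml_subset G hGfv v
  have hB := @fv_B40_subset B hBfv v
  simp only [PFml.not, PFml.iff, PFml.fv, leF, vA, PTerm.fv, List.foldr, Finset.mem_union,
    Finset.mem_erase, Finset.mem_insert, Finset.mem_singleton, Finset.notMem_empty] at hv hH hB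
  simp only [List.mem_cons]
  tauto

omit hGfv in
theorem closed_A28 : (A28 B).Closed := by
  rw [A28, closed_alls_iff]
  intro v hv
  have := @hBfv v
  simp_all [PFml.fv, PFml.not]

theorem closed_Qfml : (Qfml G B).Closed :=
  closed_bigAnd <| List.forall_mem_append.2 ⟨closed_of_mem_IRAstarAxioms, by
    simpa using ⟨closed_A26 hGfv, closed_A27 hGfv hBfv, closed_A28 hBfv⟩⟩

end Closed

namespace IQC

variable {G B : PFml} {Γ : List PFml}

theorem rename₃_functional (hGfv : G.fv ⊆ {0, 1, 2}) (hGbv : ∀ v ∈ G.bv, 10 ≤ v)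
    (hQ : Qfml G B ∈ Γ) (a b c d : ℕ) (ha : a < 10 := by decide) (hb : b < 10 := by decide)
    (hc : c < 10 := by decide) (hd : d < 10 := by decide) :
    IQC Γ (((G.rename₃ a b c).and (G.rename₃ a b d)).imp (vE (.var c) (.var d))) := by
  have hA26 : IQC Γ (A26 G) := of_bigAnd (List.mem_append_right _ (by simp)) (.hyp hQ)
  have hclosed := closed_A26 hGfv
  rw [A26_eq hGfv] at hA26 hclosed
  have hinst := alls_elim (argSub [.var a, .var b, .var c, .var d]) (by decide)
    ((closed_alls_iff _ _).1 hclosed) (fun x hx u hu hubv => ?_) hA26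
  · have hc₁ : (G.rename₃ 0 1 2).msub (argSub [.var a, .var b, .var c, .var d]) = G.rename₃ a b c :=
      PFml.rename₃_msub hGfv hGbv rfl rfl rfl
    have hd₁ : (G.rename₃ 0 1 3).msub (argSub [.var a, .var b, .var c, .var d]) = G.rename₃ a b d :=
      PFml.rename₃_msub hGfv hGbv rfl rfl rfl
    rwa [PFml.msub, PFml.msub, hc₁, hd₁] at hinst
  · have hu10 : 10 ≤ u := hGbv u (by simpa [PFml.bv, PFml.bv_rename₃, vE] using hubv)
    simp only [List.mem_cons, List.not_mem_nil, or_false] at hx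
    rcases hx with rfl | rfl | rfl | rfl <;> simp [argSub, PTerm.fv] at hu <;> omega

variable (hΓ : ∀ ψ ∈ Γ, ψ.Closed) (hQ : Qfml G B ∈ Γ) (hGfv : G.fv ⊆ {0, 1, 2})
include hΓ hQ hGfv

theorem diagPremise_of_dec (hdec : PFml.all 0 ((phi G 0).not.or (phi G 0)) ∈ Γ) :
    IQC Γ (diagPremise G) := by
  have hfresh : 1 ∉ (phi G 0).fv := notMem_fv_phi hGfv (by decide)
  have hnot : IQC Γ ((phi G 0).not.imp (.ex 1 (diagRel G 0 1))) := by
    refine .impE (ex_imp ?_ ?_ (notMem_fv_of_closed hΓ 1)) (exists_vZ hΓ hQ)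
    · exact .impI (.impI (exI_self (.andI (.impI hyp₁) (.impI hyp₂))))
    · simpa [PFml.not, PFml.fv] using hfresh
  have hphi : IQC Γ ((phi G 0).imp (.ex 1 (diagRel G 0 1))) := by
    refine .impE (ex_imp ?_ ?_ (notMem_fv_of_closed hΓ 1)) (exists_not_vZ hΓ hQ)
    · exact .impI (.impI (exI_self
        (.andI (.impI (.botE (.impE hyp₂ hyp₀))) (.impI (.botE (.impE hyp₀ hyp₁))))))
    · simpa [PFml.fv] using hfresh
  have hex : IQC Γ (.ex 1 (diagRel G 0 1)) := .impE (or_imp hnot hphi) (allE_self (.hyp hdec))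
  exact .allI (.impE (.impI (.impI hyp₁)) hex) (notMem_fv_of_closed hΓ 0)

variable (hGbv : ∀ v ∈ G.bv, 10 ≤ v)
include hGbv

theorem phi_congr (hG : G.IsArithmetical) :
    IQC Γ ((vE (.var 0) (.var 2)).imp ((phi G 0).iff (phi G 2))) := by
  refine cut (eqRefl_of_closed hΓ hQ) (.impI ?_)
  have hiff := msub_iff_msub (G := G) (B := B) (φ := phi G 0) (s := .var) (s' := sub1 0 (.var 2))
    (Γ := vE (.var 0) (.var 2) :: eqRefl :: Γ) (by simp [hQ]) hyp₁
    ⟨.inl ⟨rfl, rfl⟩, PFml.isArithmetical_msub.2 hG⟩ (fun x hx => ?_) (fun v hv => ?_)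
  · rwa [PFml.msub_var, phi_msub hGfv hGbv (x := 0) (y := 2) rfl] at hiff
  · have hx' : x = 1 ∨ 10 ≤ x := by
      simp only [phi, vZ, PFml.bv, PFml.bv_rename₃, Finset.mem_union, Finset.mem_insert,
        Finset.notMem_empty, false_or] at hx
      exact hx.imp_right (hGbv x)
    simp only [List.forall_mem_cons]
    have heqRefl : eqRefl.Closed := by simp [PFml.Closed, eqRefl, vE, PFml.fv, PTerm.fv]
    refine ⟨?_, heqRefl.notMem x, notMem_fv_of_closed hΓ x⟩
    simp [vE, PFml.fv, PTerm.fv]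
    omega
  · obtain rfl := Finset.mem_singleton.1 (fv_phi_subset hGfv 0 hv)
    exact hyp₀

theorem eqDiagRel_of_closed (hG : G.IsArithmetical) : IQC Γ (eqDiagRel G) := by
  have hphi := phi_congr hΓ hQ hGfv hGbv hG
  have hZ : IQC Γ ((vE (.var 1) (.var 3)).imp ((vZ (.var 1)).iff (vZ (.var 3)))) :=
    cut (eqRefl_of_closed hΓ hQ) <| .impI <| .andI
      (vZ_congr (G := G) (B := B) (by simp [hQ]) hyp₀)
      (vZ_congr (G := G) (B := B) (by simp [hQ])
        (vE_symm (G := G) (B := B) (by simp [hQ]) hyp₁ hyp₀))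
  refine alls_intro (.impE (.impE (.impI (.impI (.impI ?_))) hphi) hZ) fun x _ =>
    notMem_fv_of_closed hΓ x
  exact iff_mono (.impE hyp₁ (.andE1 (.andE2 hyp₀))) (not_congr (.impE hyp₂ (.andE1 hyp₀)))

/- The second copy of the value variable is first taken to be `3`, since `1` is bound in `phi`. -/
theorem vZ_of_phi : IQC Γ ((phi G 2).imp ((G.rename₃ 2 2 1).imp (vZ (.var 1)))) := by
  have h₁₃ : IQC Γ (((vZ (.var 1)).and (G.rename₃ 2 2 1)).imp
      ((G.rename₃ 2 2 3).imp (vZ (.var 3)))) :=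
    .impI <| .impI <| .impE (vZ_congr (G := G) (B := B) (by simp [hQ]) <|
      .impE (rename₃_functional (B := B) hGfv hGbv (by simp [hQ]) 2 2 1 3)
        (.andI (.andE2 hyp₁) hyp₀)) (.andE1 hyp₁)
  have h₃ : IQC Γ ((phi G 2).imp ((G.rename₃ 2 2 3).imp (vZ (.var 3)))) := by
    refine ex_imp h₁₃ (fun h => ?_) (notMem_fv_of_closed hΓ 1)
    rcases Finset.mem_union.1 h with h | h
    · have := PFml.mem_fv_rename₃ hGfv h
      omega
    · simp [vZ, PFml.fv, PTerm.fv] at h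
  have hfree : ((phi G 2).imp ((G.rename₃ 2 2 3).imp (vZ (.var 3)))).FreeForM
      (sub1 3 (.var 1)) := by
    refine ⟨PFml.freeForM_of_disjoint_bv fun v hv => .inl ?_, PFml.freeForM_sub1 ?_, trivial⟩
    · obtain rfl := Finset.mem_singleton.1 (fv_phi_subset hGfv 2 hv)
      rfl
    · rintro u hu hubv
      obtain rfl := Finset.mem_singleton.1 hu
      have := hGbv 1 (by rwa [PFml.bv_rename₃] at hubv)
      omega
  have hinst := IQC.allE (.var 1) (.allI h₃ (notMem_fv_of_closed hΓ 3)) hfree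
  have hphi : (phi G 2).msub (sub1 3 (.var 1)) = phi G 2 := phi_msub hGfv hGbv rfl
  have hGval : (G.rename₃ 2 2 3).msub (sub1 3 (.var 1)) = G.rename₃ 2 2 1 :=
    PFml.rename₃_msub hGfv hGbv rfl rfl rfl
  rwa [PFml.msub, PFml.msub, hphi, hGval] at hinst

theorem not_diag : IQC Γ ((G.rename₃ 2 2 1).and (diagRel G 2 1)).not := by
  refine cut (vZ_of_phi hΓ hQ hGfv hGbv) (.impI ?_)
  have hZ : IQC (((G.rename₃ 2 2 1).and (diagRel G 2 1)) ::
      (phi G 2).imp ((G.rename₃ 2 2 1).imp (vZ (.var 1))) :: Γ) (vZ (.var 1)) := by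
    refine .impE (.andE2 (.andE2 hyp₀)) (.impI ?_)
    exact .impE (.impE (.andE1 (.andE2 hyp₁)) (.impE (.impE hyp₂ hyp₀) (.andE1 hyp₁))) hyp₀
  exact .impE (.impE (.andE1 (.andE2 hyp₀)) hZ) (exI_self (.andI hZ (.andE1 hyp₀)))

omit hΓ hQ in
theorem diagIndex_imp_ex :
    IQC Γ ((diagIndex G).imp (.ex 1 ((G.rename₃ 2 2 1).and (diagRel G 2 1)))) := by
  refine .impI ?_
  have hfree : (PFml.bot.not.imp (.ex 1 ((G.rename₃ 2 0 1).and (diagRel G 0 1)))).FreeForM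
      (sub1 0 (.var 2)) := by
    refine PFml.freeForM_sub1 fun u hu hubv => ?_
    obtain rfl := Finset.mem_singleton.1 hu
    have h2 : 2 ∉ G.bv := fun h => absurd (hGbv 2 h) (by decide)
    simp [PFml.bv, PFml.not, PFml.iff, PFml.bv_rename₃, diagRel, phi, vZ, h2] at hubv
  have hinst := IQC.allE (.var 2) (hyp₀ (p := diagIndex G) (Γ := Γ)) hfree
  let s : ℕ → PTerm := fun v => if v = 1 then .var 1 else sub1 0 (.var 2) v
  have hGdiag : (G.rename₃ 2 0 1).msub s = G.rename₃ 2 2 1 :=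
    PFml.rename₃_msub hGfv hGbv rfl rfl rfl
  have hrel : (diagRel G 0 1).msub s = diagRel G 2 1 := diagRel_msub hGfv hGbv rfl rfl
  rw [PFml.msub, PFml.msub, PFml.msub, hGdiag, hrel] at hinst
  exact .impE hinst imp_refl

theorem not_exists_diagIndex : IQC Γ (PFml.ex 2 (diagIndex G)).not := by
  have hnot : IQC Γ (PFml.ex 1 ((G.rename₃ 2 2 1).and (diagRel G 2 1))).not :=
    ex_imp (not_diag hΓ hQ hGfv hGbv) (Finset.notMem_empty 1) (notMem_fv_of_closed hΓ 1)
  exact ex_imp (imp_trans (diagIndex_imp_ex hGfv hGbv) hnot) (Finset.notMem_empty 2)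
    (notMem_fv_of_closed hΓ 2)

end IQC

theorem MQC_PsiStar {G B : PFml} (hGfv : G.fv ⊆ {0, 1, 2}) (hGbv : ∀ v ∈ G.bv, 10 ≤ v)
    (hBfv : B.fv ⊆ {0, 1}) (hG : G.IsArithmetical) (hB : B.IsArithmetical) :
    MQC G B [] (PsiStar G B) := by
  let Γ := [PFml.all 0 ((phi G 0).not.or (phi G 0)), Qfml G B]
  have hΓ : ∀ ψ ∈ Γ, ψ.Closed := by
    have hdec : (PFml.all 0 ((phi G 0).not.or (phi G 0))).Closed := by
      have := fv_phi_subset hGfv 0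
      rw [PFml.Closed]
      simpa [PFml.not, PFml.fv, Finset.erase_eq_empty_iff, Finset.subset_singleton_iff] using this
    simp [Γ, hdec, closed_Qfml hGfv hBfv]
  have hQ : Qfml G B ∈ Γ := by simp [Γ]
  have heqBot : IQC Γ eqBot :=
    IQC.alls_intro (.impI IQC.imp_refl) fun x _ => IQC.notMem_fv_of_closed hΓ x
  have heqDiagRel : IQC Γ (eqDiagRel G) := IQC.eqDiagRel_of_closed hΓ hQ hGfv hGbv hG
  have hpremise : IQC Γ (diagPremise G) := IQC.diagPremise_of_dec hΓ hQ hGfv (by simp [Γ])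
  have hindex : MQC G B Γ (.ex 2 (diagIndex G)) :=
    .impE (.impE (.axCT (isInstance_nCTstar hGfv hGbv hG hB))
      (.andI (.hyp hQ) (.andI heqBot.toMQC heqDiagRel.toMQC))) hpremise.toMQC
  exact .impI (.impI (.impE (IQC.not_exists_diagIndex hΓ hQ hGfv hGbv).toMQC hindex))

end Cpc

theorem MQC_proves_nonclassical_formula_general (G B : Cpc.PFml)
    (hGfv : G.fv ⊆ {0, 1, 2}) (hGbv : ∀ v ∈ G.bv, 10 ≤ v) (hG : G.IsArithmetical)
    (hGdef : ∀ ρ : ℕ → ℕ, Cpc.TrueStd ρ G ↔ Cpc.K (ρ 0) (ρ 1) = Part.some (ρ 2))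
    (hBfv : B.fv ⊆ {0, 1}) (hBbv : ∀ v ∈ B.bv, 10 ≤ v) (hB : B.IsArithmetical)
    (hBdef : ∀ ρ : ℕ → ℕ, Cpc.TrueStd ρ B ↔ Cpc.g (ρ 0) (ρ 1) = 1) :
    Cpc.MQC G B [] (Cpc.PsiStar G B) ∧ ¬ Cpc.CQC [] (Cpc.PsiStar G B) :=
  ⟨Cpc.MQC_PsiStar hGfv hGbv hBfv hG hB, Cpc.not_CQC_PsiStar hGfv hGbv hGdef hBfv hBbv hBdef⟩

/-- the predicate formula `Ψ* = (Q → Ψ)`, where `Ψ` is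
`¬∀x(¬Φ(x) ∨ Φ(x))` with `Φ(x) = ∃y(Z(y) & G(x,x,y))`, is deducible in `MQC` but not
in the classical predicate calculus `CQC`. -/
theorem MQC_proves_nonclassical_formula (G B : Cpc.PFml)
    (hGfv : G.fv ⊆ {0, 1, 2}) (hGbv : ∀ v ∈ G.bv, 10 ≤ v) (hGsig : Cpc.IsSigma G)
    (hGdef : ∀ ρ : ℕ → ℕ, Cpc.TrueStd ρ G ↔ Cpc.K (ρ 0) (ρ 1) = Part.some (ρ 2))
    (hBfv : B.fv ⊆ {0, 1}) (hBbv : ∀ v ∈ B.bv, 10 ≤ v) (hBsig : Cpc.IsSigma B)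
    (hBdef : ∀ ρ : ℕ → ℕ, Cpc.TrueStd ρ B ↔ Cpc.g (ρ 0) (ρ 1) = 1) :
    Cpc.MQC G B [] (Cpc.PsiStar G B) ∧ ¬ Cpc.CQC [] (Cpc.PsiStar G B) :=
  MQC_proves_nonclassical_formula_general G B hGfv hGbv hGsig.isArithmetical hGdef hBfv hBbv
    hBsig.isArithmetical hBdef
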